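/- arXiv:2103.15799 — 2 statements merged into one kernel-verified Lean document; each statement's English description precedes it below -/
import Mathlib

section
/- Let T be a complete first-order theory and let φ(x̄;ȳ) be a formula which has the independence property. Then there is a family (āᵢ, b̄ᵢ : i ∈ ℚ) of tuples in some model M of T, indexed by the random ordered bipartite graph G* (with āᵢ indexed by U(G*) ≅ ℚ and b̄ⱼ indexed by V(G*) ≅ ℚ), such that M ⊨ φ(āᵢ; b̄ⱼ) if and only if R*(i,j) holds, and the family (āᵢ, b̄ᵢ : i ∈ ℚ) is L*-indiscernible. -/
open FirstOrder FirstOrder.Language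

universe u v

/-- An elementary extension of `M`: a structure together with an elementary embedding of `M`
into it. -/
structure ElemExt (L : FirstOrder.Language.{u, v}) (M : Type (max u v)) [L.Structure M] where
  carrier : Type (max u v)
  [str : L.Structure carrier]
  emb : M ↪ₑ[L] carrier

attribute [instance] ElemExt.str

/-- A formula `φ(x̄; ȳ)` (without parameters) has the order property with respect to a theory
`T` if in some model of `T` there are sequences `(āᵢ : i < ω)` and `(b̄ⱼ : j < ω)` such that
`φ(āᵢ; b̄ⱼ)` holds iff `i < j`. -/
def FormulaHasOP {L : FirstOrder.Language.{u, v}} (T : L.Theory) {α β : Type*}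
    (φ : L.Formula (α ⊕ β)) : Prop :=
  ∃ (N : FirstOrder.Language.Theory.ModelType.{u, v, max u v} T)
    (a : ℕ → α → N) (b : ℕ → β → N),
    ∀ i j : ℕ, φ.Realize (Sum.elim (a i) (b j)) ↔ i < j

/-- A formula `φ(x̄; ȳ)` (without parameters) has the independence property with respect to a
theory `T` if in some model of `T` there are tuples `(āᵢ : i < ω)` and `(b̄_S : S ⊆ ω)` such
that `φ(āᵢ; b̄_S)` holds iff `i ∈ S`. -/
def FormulaHasIP {L : FirstOrder.Language.{u, v}} (T : L.Theory) {α β : Type*}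
    (φ : L.Formula (α ⊕ β)) : Prop :=
  ∃ (N : FirstOrder.Language.Theory.ModelType.{u, v, max u v} T)
    (a : ℕ → α → N) (b : Set ℕ → β → N),
    ∀ (i : ℕ) (S : Set ℕ), φ.Realize (Sum.elim (a i) (b S)) ↔ i ∈ S

/-- A formula `φ(x̄; ȳ)` with parameters `c` from `M` has the order property if in some
elementary extension of `M` there are sequences `(āᵢ : i < ω)` and `(b̄ⱼ : j < ω)` such that
`φ(āᵢ; b̄ⱼ; c)` holds iff `i < j`. -/
def HasOPWithParams {L : FirstOrder.Language.{u, v}} {M : Type (max u v)} [L.Structure M]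
    {α β γ : Type*} (φ : L.Formula ((α ⊕ β) ⊕ γ)) (c : γ → M) : Prop :=
  ∃ (N : ElemExt L M) (a : ℕ → α → N.carrier) (b : ℕ → β → N.carrier),
    ∀ i j : ℕ, φ.Realize (Sum.elim (Sum.elim (a i) (b j)) (N.emb ∘ c)) ↔ i < j

/-- A formula `φ(x̄; ȳ)` with parameters `c` from `M` has the independence property if in some
elementary extension of `M` there are tuples `(āᵢ : i < ω)` and `(b̄_S : S ⊆ ω)` such that
`φ(āᵢ; b̄_S; c)` holds iff `i ∈ S`. -/
def HasIPWithParams {L : FirstOrder.Language.{u, v}} {M : Type (max u v)} [L.Structure M]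
    {α β γ : Type*} (φ : L.Formula ((α ⊕ β) ⊕ γ)) (c : γ → M) : Prop :=
  ∃ (N : ElemExt L M) (a : ℕ → α → N.carrier) (b : Set ℕ → β → N.carrier),
    ∀ (i : ℕ) (S : Set ℕ), φ.Realize (Sum.elim (Sum.elim (a i) (b S)) (N.emb ∘ c)) ↔ i ∈ S

/-- The family of tuples `(c̄ᵢ : i ∈ ι)` is an indiscernible sequence over the set `A`:
any two strictly increasing tuples of indices realize the same formulas with parameters
from `A`. -/
def IsIndiscernibleOver {L : FirstOrder.Language.{u, v}} {M : Type (max u v)} [L.Structure M]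
    {ι : Type*} [LinearOrder ι] {γ : Type*} (c : ι → γ → M) (A : Set M) : Prop :=
  ∀ (n m : ℕ) (i j : Fin n → ι), StrictMono i → StrictMono j →
    ∀ p : Fin m → M, (∀ l, p l ∈ A) →
      ∀ φ : L.Formula (Fin n × γ ⊕ Fin m),
        φ.Realize (Sum.elim (fun v : Fin n × γ => c (i v.1) v.2) p) ↔
          φ.Realize (Sum.elim (fun v : Fin n × γ => c (j v.1) v.2) p)

/-- The family of tuples `(c̄ᵢ : i ∈ ι)` is an indiscernible sequence. -/
def IsIndiscernible {L : FirstOrder.Language.{u, v}} {M : Type (max u v)} [L.Structure M]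
    {ι : Type*} [LinearOrder ι] {γ : Type*} (c : ι → γ → M) : Prop :=
  IsIndiscernibleOver (L := L) c ∅

/-- Two families of tuples are mutually indiscernible if each is indiscernible over the union
of the tuples of the other. -/
def MutuallyIndiscernible {L : FirstOrder.Language.{u, v}} {M : Type (max u v)} [L.Structure M]
    {ι : Type*} [LinearOrder ι] {γ δ : Type*} (a : ι → γ → M) (b : ι → δ → M) : Prop :=
  IsIndiscernibleOver (L := L) a (⋃ i, Set.range (b i)) ∧
    IsIndiscernibleOver (L := L) b (⋃ i, Set.range (a i))

/-- The family of tuples `(c̄ᵢ : i ∈ ι)` is totally indiscernible: any two tuples of distinct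
indices (in any order) realize the same formulas. -/
def IsTotallyIndiscernible {L : FirstOrder.Language.{u, v}} {M : Type (max u v)} [L.Structure M]
    {ι : Type*} [LinearOrder ι] {γ : Type*} (c : ι → γ → M) : Prop :=
  ∀ (n : ℕ) (i j : Fin n → ι), Function.Injective i → Function.Injective j →
    ∀ φ : L.Formula (Fin n × γ),
      φ.Realize (fun v : Fin n × γ => c (i v.1) v.2) ↔
        φ.Realize (fun v : Fin n × γ => c (j v.1) v.2)

/-- A set in a linear order is dense (in the order) and unbounded above and below. -/
def DenseUnbounded {α : Type*} [LinearOrder α] (S : Set α) : Prop :=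
  (∀ x y : α, x < y → ∃ z ∈ S, x < z ∧ z < y) ∧ (∀ x : α, ∃ z ∈ S, z < x) ∧
    (∀ x : α, ∃ z ∈ S, x < z)

/-- `R : α → β → Prop` presents (a structure isomorphic to) the random ordered bipartite
graph `G*`, i.e. the Fraïssé limit of finite ordered bipartite graphs: both parts are
countable nonempty dense linear orders without endpoints and the edge relation is generic. -/
def IsRandomOBG {α β : Type*} [LinearOrder α] [LinearOrder β] (R : α → β → Prop) : Prop :=
  Countable α ∧ Countable β ∧ Nonempty α ∧ Nonempty β ∧
    (∀ F G : Finset β, Disjoint F G →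
      DenseUnbounded {x : α | (∀ f ∈ F, R x f) ∧ ∀ g ∈ G, ¬R x g}) ∧
    (∀ F G : Finset α, Disjoint F G →
      DenseUnbounded {y : β | (∀ f ∈ F, R f y) ∧ ∀ g ∈ G, ¬R g y})

/-- An element of the random ordered bipartite graph `G*`, whose two parts `U(G*)` and
`V(G*)` are both identified with `ℚ`: `Sum.inl` is the `U`-part, `Sum.inr` the `V`-part. -/
abbrev GStarIdx : Type := ℚ ⊕ ℚ

/-- The index of the pair `(s, q)`: in the `U`-part if `s = true`, in the `V`-part
otherwise. -/
def mkIdx {n : ℕ} (s : Fin n → Bool) (q : Fin n → ℚ) : Fin n → GStarIdx := fun k =>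
  bif s k then Sum.inl (q k) else Sum.inr (q k)

/-- Two pairs of elements of `G*` (with edge relation `R`) have the same quantifier-free
`L*`-type, where `L* = {U, ≤_U, V, ≤_V, R}`. -/
def SamePairType (R : ℚ → ℚ → Prop) :
    GStarIdx → GStarIdx → GStarIdx → GStarIdx → Prop
  | Sum.inl p, Sum.inl q, Sum.inl p', Sum.inl q' => (p ≤ q ↔ p' ≤ q') ∧ (q ≤ p ↔ q' ≤ p')
  | Sum.inr p, Sum.inr q, Sum.inr p', Sum.inr q' => (p ≤ q ↔ p' ≤ q') ∧ (q ≤ p ↔ q' ≤ p')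
  | Sum.inl p, Sum.inr q, Sum.inl p', Sum.inr q' => R p q ↔ R p' q'
  | Sum.inr q, Sum.inl p, Sum.inr q', Sum.inl p' => R p q ↔ R p' q'
  | _, _, _, _ => False

/-- Two tuples of elements of `G*` (with edge relation `R`) have the same quantifier-free
`L*`-type. -/
def SameQfType (R : ℚ → ℚ → Prop) {n : ℕ} (i j : Fin n → GStarIdx) : Prop :=
  ∀ k l : Fin n, SamePairType R (i k) (i l) (j k) (j l)

/-- The variables carried by a coordinate of a mixed tuple: a `U`-index carries an `x̄`-tuple
of length `da`, a `V`-index a `ȳ`-tuple of length `db`. -/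
def MixVar (da db : ℕ) : Bool → Type
  | true => Fin da
  | false => Fin db

/-- Choose the `a`-tuple or the `b`-tuple according to the side. -/
def pickSide {M : Type*} {da db : ℕ} (a : Fin da → M) (b : Fin db → M) :
    (s : Bool) → MixVar da db s → M
  | true, w => a w
  | false, w => b w

/-- The family `(āᵢ : i ∈ U(G*) ≅ ℚ) ∪ (b̄ⱼ : j ∈ V(G*) ≅ ℚ)`, indexed by the random ordered
bipartite graph `G*` with edge relation `R`, is `L*`-indiscernible: index tuples with the same
quantifier-free `L*`-type in `G*` realize the same `L`-formulas in `M`. -/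
def IsLStarIndiscernible {L : FirstOrder.Language.{u, v}} {M : Type (max u v)} [L.Structure M]
    (R : ℚ → ℚ → Prop) {da db : ℕ} (a : ℚ → Fin da → M) (b : ℚ → Fin db → M) : Prop :=
  ∀ (n : ℕ) (s : Fin n → Bool) (q q' : Fin n → ℚ),
    SameQfType R (mkIdx s q) (mkIdx s q') →
      ∀ φ : L.Formula ((k : Fin n) × MixVar da db (s k)),
        φ.Realize (fun v => pickSide (a (q v.1)) (b (q v.1)) (s v.1) v.2) ↔
          φ.Realize (fun v => pickSide (a (q' v.1)) (b (q' v.1)) (s v.1) v.2)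


theorem partite_step {J X : Type} [Finite J] [Finite X] (R : J → J → X → X → Prop)
    {ι : Type*} (s : ι → J) (A : J → J → Prop) :
    ∃ (X' : Type) (_ : Finite X') (R' : J → J → X' → X' → Prop),
      ∀ χ : (ι → J × X') → Prop, ∃ f : J → X → X',
        (∀ j j' x x', R' j j' (f j x) (f j' x') ↔ R j j' x x') ∧
        ∀ t t' : J → X,
          (∀ i i', R (s i) (s i') (t (s i)) (t (s i')) ↔ A (s i) (s i')) →
          (∀ i i', R (s i) (s i') (t' (s i)) (t' (s i')) ↔ A (s i) (s i')) →
          (χ (fun i => (s i, f (s i) (t (s i)))) ↔ χ (fun i => (s i, f (s i) (t' (s i))))) := by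
  classical
  let Al := {t : J → X // ∀ i i', R (s i) (s i') (t (s i)) (t (s i')) ↔ A (s i) (s i')}
  obtain ⟨κ, hκ, H⟩ := Combinatorics.Line.exists_mono_in_high_dimension Al Prop
  refine ⟨(κ → X) ⊕ (X × κ), inferInstance, fun j j' u v => 
    match u, v with
    | .inl f, .inl g => ¬ (A j j' ↔ ∃ i, ¬ (R j j' (f i) (g i) ↔ A j j'))
    | .inl f, .inr (y, k) => R j j' (f k) y
    | .inr (x, k), .inl g => R j j' x (g k)
    | .inr (x, _), .inr (y, _) => R j j' x y, fun χ => ?_⟩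
  obtain ⟨l, c, hl⟩ := H (fun w => χ (fun i => (s i, .inl (fun k => (w k).1 (s i)))))
  obtain ⟨k0, hk0⟩ := l.proper
  refine ⟨fun j x => if j ∈ Set.range s then
      .inl (fun k => ((l.idxFun k).map (fun t => t.1 j)).getD x) else .inr (x, k0), ?_, ?_⟩
  · intro j j' x x'
    by_cases hj : j ∈ Set.range s <;> by_cases hj' : j' ∈ Set.range s
    · simp only [hj, hj', if_true]
      have key : (∃ i, ¬ (R j j' (((l.idxFun i).map (fun t => t.1 j)).getD x)
          (((l.idxFun i).map (fun t => t.1 j')).getD x') ↔ A j j')) ↔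
          ¬ (R j j' x x' ↔ A j j') := by
        constructor
        · rintro ⟨i, hi⟩
          rcases h : l.idxFun i with _ | t
          · simpa [h] using hi
          · obtain ⟨a, rfl⟩ := hj
            obtain ⟨b, rfl⟩ := hj'
            exact absurd (t.2 a b) (by simpa [h] using hi)
        · intro h
          exact ⟨k0, by simpa [hk0] using h⟩
      rw [key]
      tauto
    · simp [hj, hj', hk0]
    · simp [hj, hj', hk0]
    · simp [hj, hj']
  · intro t t' ht ht'
    have h1 := hl ⟨t, ht⟩
    have h2 := hl ⟨t', ht'⟩
    have e : ∀ (t : Al) i k, (l t k).1 (s i) =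
        ((l.idxFun k).map (fun t => t.1 (s i))).getD (t.1 (s i)) := by
      intro t i k
      rw [Combinatorics.Line.apply_def]
      rcases h : l.idxFun k with _ | t <;> simp [h]
    simp only [e] at h1 h2
    simp only [Set.mem_range_self, if_true]
    rw [h1, h2]

theorem partite_iter {J : Type} [Finite J] {Q : Type*} (ι : Q → Type)
    (tasks : List (Σ r : Q, (ι r → J) × (J → J → Prop))) :
    ∀ {X : Type} [Finite X] (R : J → J → X → X → Prop),
    ∃ (X' : Type) (_ : Finite X') (R' : J → J → X' → X' → Prop),
      ∀ χ : (r : Q) → (ι r → J × X') → Prop, ∃ f : J → X → X',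
        (∀ j j' x x', R' j j' (f j x) (f j' x') ↔ R j j' x x') ∧
        ∀ τ ∈ tasks, ∀ t t' : J → X,
          (∀ i i', R (τ.2.1 i) (τ.2.1 i') (t (τ.2.1 i)) (t (τ.2.1 i')) ↔
            τ.2.2 (τ.2.1 i) (τ.2.1 i')) →
          (∀ i i', R (τ.2.1 i) (τ.2.1 i') (t' (τ.2.1 i)) (t' (τ.2.1 i')) ↔
            τ.2.2 (τ.2.1 i) (τ.2.1 i')) →
          (χ τ.1 (fun i => (τ.2.1 i, f (τ.2.1 i) (t (τ.2.1 i)))) ↔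
            χ τ.1 (fun i => (τ.2.1 i, f (τ.2.1 i) (t' (τ.2.1 i))))) := by
  induction tasks with
  | nil =>
    intro X _ R
    exact ⟨X, inferInstance, R, fun χ => ⟨fun _ x => x, by simp, by simp⟩⟩
  | cons τ l ih =>
    intro X _ R
    obtain ⟨X1, hX1, R1, H1⟩ := partite_step R τ.2.1 τ.2.2
    obtain ⟨X2, hX2, R2, H2⟩ := ih R1
    refine ⟨X2, hX2, R2, fun χ => ?_⟩
    obtain ⟨f2, hf2, h2⟩ := H2 χ
    obtain ⟨f1, hf1, h1⟩ := H1 (fun y => χ τ.1 (fun i => ((y i).1, f2 (y i).1 (y i).2)))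
    refine ⟨fun j x => f2 j (f1 j x), fun j j' x x' => by rw [hf2, hf1], ?_⟩
    intro σ hσ t t' ht ht'
    rcases List.mem_cons.1 hσ with rfl | hσ
    · exact h1 t t' ht ht'
    · exact h2 σ hσ (fun j => f1 j (t j)) (fun j => f1 j (t' j))
        (fun i i' => by rw [hf1]; exact ht i i') (fun i i' => by rw [hf1]; exact ht' i i')

theorem partite_all {J : Type} [Finite J] {Q : Type*} [Finite Q] (ι : Q → Type)
    [∀ r, Finite (ι r)] {X : Type} [Finite X] (R : J → J → X → X → Prop) :
    ∃ (X' : Type) (_ : Finite X') (R' : J → J → X' → X' → Prop),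
      ∀ χ : (r : Q) → (ι r → J × X') → Prop, ∃ f : J → X → X',
        (∀ j j' x x', R' j j' (f j x) (f j' x') ↔ R j j' x x') ∧
        ∀ (r : Q) (s : ι r → J) (t t' : J → X),
          (∀ i i', R (s i) (s i') (t (s i)) (t (s i')) ↔
            R (s i) (s i') (t' (s i)) (t' (s i'))) →
          (χ r (fun i => (s i, f (s i) (t (s i)))) ↔
            χ r (fun i => (s i, f (s i) (t' (s i))))) := by
  classical
  have := Fintype.ofFinite (Σ r : Q, (ι r → J) × (J → J → Prop))
  obtain ⟨X', h1, R', H⟩ := partite_iter ι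
    (Finset.univ : Finset (Σ r : Q, (ι r → J) × (J → J → Prop))).toList R
  refine ⟨X', h1, R', fun χ => ?_⟩
  obtain ⟨f, hf, h⟩ := H χ
  refine ⟨f, hf, fun r s t t' htt => ?_⟩
  exact h ⟨r, s, fun j j' => R j j' (t' j) (t' j')⟩ (by simp) t t' htt (fun _ _ => Iff.rfl)

theorem exists_ultra_lim {α K : Type*} [Finite K] (U : Ultrafilter α) (g : α → K) :
    ∃ k, ∀ᶠ x in U, g x = k := by
  have h : ∀ᶠ x in (U : Filter α), ∃ k, g x = k := Filter.Eventually.of_forall (by simp)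
  rwa [Ultrafilter.eventually_exists_iff] at h

noncomputable def limCol {K : Type*} [Finite K] (U : Ultrafilter ℕ) (c : Finset ℕ → K) :
    ℕ → Finset ℕ → K
  | 0, s => c s
  | k + 1, s => (exists_ultra_lim U (fun x => limCol U c k (insert x s))).choose

theorem limCol_spec {K : Type*} [Finite K] (U : Ultrafilter ℕ) (c : Finset ℕ → K) (k : ℕ)
    (s : Finset ℕ) : ∀ᶠ x in U, limCol U c k (insert x s) = limCol U c (k + 1) s :=
  (exists_ultra_lim U (fun x => limCol U c k (insert x s))).choose_spec

theorem ramsey_inf {K : Type*} [Finite K] (c : Finset ℕ → K) (b : ℕ) :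
    ∃ H : Finset ℕ, H.card = b ∧ ∀ s ⊆ H, ∀ s' ⊆ H, s.card = s'.card → c s = c s' := by
  classical
  let U := Filter.hyperfilter ℕ
  have key : ∀ m : ℕ, ∃ H : Finset ℕ, H.card = m ∧ ∀ s ⊆ H, ∀ k ≤ b,
      k + s.card ≤ b → limCol U c k s = limCol U c (k + s.card) ∅ := by
    intro m
    induction m with
    | zero => exact ⟨∅, rfl, fun s hs k _ => by rw [Finset.subset_empty.1 hs]; simp⟩
    | succ m ih =>
      obtain ⟨H, hH, h⟩ := ih
      have h1 : ∀ᶠ x in (U : Filter ℕ), ∀ s ∈ H.powerset, ∀ k ∈ Finset.range (b + 1),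
          limCol U c k (insert x s) = limCol U c (k + 1) s := by
        rw [Filter.eventually_all_finset]
        intro s _
        rw [Filter.eventually_all_finset]
        intro k _
        exact limCol_spec U c k s
      have h2 : ∀ᶠ x in (U : Filter ℕ), x ∉ H := by
        have := Filter.compl_mem_hyperfilter_of_finite H.finite_toSet
        filter_upwards [this] with x hx
        simpa using hx
      obtain ⟨x, hx1, hx2⟩ := (h1.and h2).exists
      refine ⟨insert x H, by simp [hx2, hH], fun s hs k hk hks => ?_⟩
      by_cases hxs : x ∈ s
      · obtain ⟨s0, hs0, rfl⟩ : ∃ s0, x ∉ s0 ∧ insert x s0 = s :=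
          ⟨s.erase x, by simp, Finset.insert_erase hxs⟩
        have hsub : s0 ⊆ H := by
          intro y hy
          have := hs (Finset.mem_insert_of_mem hy)
          rcases Finset.mem_insert.1 this with rfl | h
          · exact absurd hy hs0
          · exact h
        rw [Finset.card_insert_of_notMem hs0] at hks ⊢
        rw [hx1 s0 (by simpa using hsub) k (by simp; omega),
          h s0 hsub (k + 1) (by omega) (by omega)]
        congr 1
        omega
      · refine h s (fun y hy => ?_) k hk hks
        rcases Finset.mem_insert.1 (hs hy) with rfl | h
        · exact absurd hy hxs
        · exact h
  obtain ⟨H, hH, h⟩ := key b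
  refine ⟨H, hH, fun s hs s' hs' hss => ?_⟩
  have a1 := h s hs 0 (by omega) (by have := Finset.card_le_card hs; omega)
  have a2 := h s' hs' 0 (by omega) (by have := Finset.card_le_card hs'; omega)
  rw [hss] at a1
  exact a1.trans a2.symm

theorem ramsey_fin (K : Type*) [Finite K] (b : ℕ) :
    ∃ p : ℕ, ∀ c : Finset ℕ → K, ∃ H : Finset ℕ, H ⊆ Finset.range p ∧ H.card = b ∧
      ∀ s ⊆ H, ∀ s' ⊆ H, s.card = s'.card → c s = c s' := by
  classical
  by_contra! hcon
  choose c hc using hcon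
  let U := Filter.hyperfilter ℕ
  choose d hd using fun s : Finset ℕ => exists_ultra_lim U (fun p => c p s)
  obtain ⟨H, hH, h⟩ := ramsey_inf d b
  have h1 : ∀ᶠ p in (U : Filter ℕ), ∀ s ∈ H.powerset, c p s = d s := by
    rw [Filter.eventually_all_finset]
    intro s _
    exact hd s
  have h2 : ∀ᶠ p in (U : Filter ℕ), H.sup id + 1 ≤ p :=
    (Nat.hyperfilter_le_atTop : (U : Filter ℕ) ≤ Filter.atTop) (Filter.eventually_ge_atTop _)
  obtain ⟨p, hp1, hp2⟩ := (h1.and h2).exists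
  obtain ⟨s, hs, s', hs', hss, hne⟩ := hc p H (fun x hx => by
    have : x ≤ H.sup id := Finset.le_sup (f := id) hx
    simp; omega) hH
  exact hne (by rw [hp1 s (by simpa using hs), hp1 s' (by simpa using hs'), h s hs s' hs' hss])

theorem card_image_eq_of_ker {ι α β : Type*} [DecidableEq α] [DecidableEq β] (s : Finset ι)
    (f : ι → α) (g : ι → β) (h : ∀ a ∈ s, ∀ b ∈ s, f a = f b ↔ g a = g b) :
    (s.image f).card = (s.image g).card := by
  classical
  have aux : ∀ x ∈ s.image f, ∃ a ∈ s, f a = x := fun x hx => by simpa using hx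
  choose k hk1 hk2 using aux
  refine Finset.card_bij (fun x hx => g (k x hx)) ?_ ?_ ?_
  · intro x hx
    exact Finset.mem_image_of_mem _ (hk1 x hx)
  · intro x hx y hy hxy
    have := (h _ (hk1 x hx) _ (hk1 y hy)).2 hxy
    rwa [hk2 x hx, hk2 y hy] at this
  · intro y hy
    obtain ⟨a, ha, rfl⟩ := Finset.mem_image.1 hy
    have hfa := Finset.mem_image_of_mem f ha
    exact ⟨f a, hfa, (h _ (hk1 _ hfa) _ ha).1 (hk2 _ hfa)⟩

theorem obg_ramsey {W : Type} [Finite W] [LinearOrder W] (R : W → W → Prop)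
    {Q : Type*} [Finite Q] (ι : Q → Type) [∀ r, Finite (ι r)] :
    ∃ (Y : Type) (_ : Finite Y) (R' : Y → Y → Prop),
      ∀ χ : (r : Q) → (ι r → Y) → Prop, ∃ E : W → Y,
        (∀ x y, R' (E x) (E y) ↔ R x y) ∧
        ∀ (r : Q) (q q' : ι r → W),
          (∀ i i', (q i ≤ q i' ↔ q' i ≤ q' i') ∧ (R (q i) (q i') ↔ R (q' i) (q' i'))) →
          (χ r (fun i => E (q i)) ↔ χ r (fun i => E (q' i))) := by
  classical
  have := Fintype.ofFinite W
  have := fun r => Fintype.ofFinite (ι r)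
  rcases isEmpty_or_nonempty W with hW | hW
  · refine ⟨W, inferInstance, R, fun χ => ⟨id, by simp, fun r q q' _ => ?_⟩⟩
    have : q = q' := funext fun i => hW.elim (q i)
    rw [this]
  let b := Fintype.card W
  obtain ⟨p, hp⟩ := ramsey_fin
    ((r : Q) → (ι r → ι r → Prop) → (ι r → Fin (b + 1)) → Prop) b
  obtain ⟨X', hX', R', H⟩ := partite_all (J := Fin p) ι (fun _ _ => R)
  refine ⟨Fin p × X', inferInstance, fun u v => R' u.1 v.1 u.2 v.2, fun χ => ?_⟩
  obtain ⟨f, hf, hχ⟩ := H χ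
  obtain ⟨S, hS, hSc, hmono⟩ := hp (fun S r A σ => ∃ (t : Fin p → W) (s : ι r → Fin p),
    (∀ i, (s i : ℕ) = Nat.nth (· ∈ S) (σ i)) ∧
    (∀ i i', R (t (s i)) (t (s i')) ↔ A i i') ∧ χ r (fun i => (s i, f (s i) (t (s i)))))
  let e0 : W → ℕ := fun w => S.orderEmbOfFin hSc ((Fintype.orderIsoFinOfCardEq W rfl).symm w)
  have he0 : StrictMono e0 := (S.orderEmbOfFin hSc).strictMono.comp (OrderIso.strictMono _)
  have he0S : ∀ w, e0 w ∈ S := fun w => Finset.orderEmbOfFin_mem _ _ _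
  have he0p : ∀ w, e0 w < p := fun w => Finset.mem_range.1 (hS (he0S w))
  let e : W → Fin p := fun w => ⟨e0 w, he0p w⟩
  have heinj : Function.Injective e := fun x y h => he0.injective (congrArg Fin.val h)
  let t : Fin p → W := Function.invFun e
  have hte : ∀ w, t (e w) = w := Function.leftInverse_invFun heinj
  refine ⟨fun w => (e w, f (e w) w), fun x y => hf _ _ _ _, ?_⟩
  -- rank function
  have hrank : ∀ (r : Q) (q : ι r → W) i, Nat.count (· ∈ Finset.univ.image (e0 ∘ q)) (e0 (q i)) =
      ((Finset.univ.filter (fun k => q k < q i)).image q).card := by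
    intro r q i
    rw [Nat.count_eq_card_filter_range, ← Finset.card_image_of_injective _ he0.injective]
    congr 1
    ext x
    simp only [Finset.mem_filter, Finset.mem_range, Finset.mem_image, Finset.mem_univ, true_and,
      Function.comp]
    constructor
    · rintro ⟨h, k, rfl⟩
      exact ⟨q k, ⟨k, he0.lt_iff_lt.1 h, rfl⟩, rfl⟩
    · rintro ⟨_, ⟨k, hk, rfl⟩, rfl⟩
      exact ⟨he0 hk, k, rfl⟩
  have key : ∀ (r : Q) (q : ι r → W) (σ : ι r → Fin (b + 1)),
      (∀ i, (σ i : ℕ) = ((Finset.univ.filter (fun k => q k < q i)).image q).card) →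
      (χ r (fun i => (e (q i), f (e (q i)) (q i))) ↔
        ∃ (t : Fin p → W) (s : ι r → Fin p),
          (∀ i, (s i : ℕ) = Nat.nth (· ∈ Finset.univ.image (e0 ∘ q)) (σ i)) ∧
          (∀ i i', R (t (s i)) (t (s i')) ↔ R (q i) (q i')) ∧
          χ r (fun i => (s i, f (s i) (t (s i))))) := by
    intro r q σ hσ
    have hnth : ∀ i, Nat.nth (· ∈ Finset.univ.image (e0 ∘ q)) (σ i) = e0 (q i) := by
      intro i
      rw [hσ, ← hrank]
      exact Nat.nth_count (p := (· ∈ Finset.univ.image (e0 ∘ q)))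
        (Finset.mem_image_of_mem (e0 ∘ q) (Finset.mem_univ i))
    constructor
    · intro h
      refine ⟨t, fun i => e (q i), fun i => (hnth i).symm, ?_, ?_⟩
      · intro i i'
        rw [hte, hte]
      · simpa only [hte] using h
    · rintro ⟨t', s, hs, hR, h⟩
      have hse : ∀ i, s i = e (q i) := fun i => Fin.ext ((hs i).trans (hnth i))
      obtain rfl : s = fun i => e (q i) := funext hse
      have := (hχ r (fun i => e (q i)) t t' (fun i i' => by rw [hR, hte, hte])).2 h
      simpa only [hte] using this
  intro r q q' hq
  have hle : ∀ (q : ι r → W) i,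
      ((Finset.univ.filter (fun k => q k < q i)).image q).card < b + 1 := fun q i =>
    Nat.lt_succ_of_le (Finset.card_le_univ _)
  have heq : ∀ i i', q i = q i' ↔ q' i = q' i' := fun i i' => by
    rw [le_antisymm_iff, le_antisymm_iff, (hq i i').1, (hq i' i).1]
  have hlt : ∀ i i', q i < q i' ↔ q' i < q' i' := fun i i' => by
    rw [← not_le, ← not_le, (hq i' i).1]
  have hsame : ∀ i, ((Finset.univ.filter (fun k => q k < q i)).image q).card =
      ((Finset.univ.filter (fun k => q' k < q' i)).image q').card := by
    intro i
    simp only [hlt]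
    exact card_image_eq_of_ker _ _ _ (fun a _ b _ => heq a b)
  let σ : ι r → Fin (b + 1) := fun i => ⟨_, hle q i⟩
  rw [key r q σ (fun i => rfl), key r q' σ (fun i => hsame i)]
  have hA : (fun i i' => R (q i) (q i')) = fun i i' => R (q' i) (q' i') := by
    funext i i'
    exact propext (hq i i').2
  have hsub : ∀ q : ι r → W, Finset.univ.image (e0 ∘ q) ⊆ S := by
    intro q x hx
    obtain ⟨i, _, rfl⟩ := Finset.mem_image.1 hx
    exact he0S _
  have hcard : (Finset.univ.image (e0 ∘ q)).card = (Finset.univ.image (e0 ∘ q')).card :=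
    card_image_eq_of_ker _ _ _ (fun a _ b _ => by
      simp only [Function.comp, he0.injective.eq_iff]; exact heq a b)
  have := congrFun (congrFun (congrFun (hmono _ (hsub q) _ (hsub q') hcard) r)
    (fun i i' => R (q i) (q i'))) σ
  rw [hA] at this
  simp only [(hq _ _).2]
  exact iff_of_eq this

theorem exists_approx {L : FirstOrder.Language.{u, v}} {N : Type*} [L.Structure N]
    {m n : ℕ} (φ : L.Formula (Fin m ⊕ Fin n))
    (a : ℕ → Fin m → N) (b : Set ℕ → Fin n → N)
    (hab : ∀ (i : ℕ) (S : Set ℕ), φ.Realize (Sum.elim (a i) (b S)) ↔ i ∈ S)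
    {W : Type} [LinearOrder W] (R : W → W → Prop)
    (D : Finset ((k : ℕ) × (Fin k → W) × (Fin k → W) × L.Formula (Fin k × (Fin m ⊕ Fin n))))
    (W1 : Finset W) :
    ∃ c : W → Fin m ⊕ Fin n → N,
      (∀ x ∈ W1, ∀ y ∈ W1,
        (φ.Realize (Sum.elim (fun i => c x (.inl i)) (fun i => c y (.inr i))) ↔ R x y)) ∧
      ∀ d ∈ D, (∀ i i', (d.2.1 i ≤ d.2.1 i' ↔ d.2.2.1 i ≤ d.2.2.1 i') ∧
          (R (d.2.1 i) (d.2.1 i') ↔ R (d.2.2.1 i) (d.2.2.1 i'))) →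
        (d.2.2.2.Realize (fun v => c (d.2.1 v.1) v.2) ↔
          d.2.2.2.Realize (fun v => c (d.2.2.1 v.1) v.2)) := by
  classical
  let W0 : Finset W := W1 ∪ D.biUnion (fun d => Finset.univ.image d.2.1 ∪ Finset.univ.image d.2.2.1)
  have hW1 : ∀ x ∈ W1, x ∈ W0 := fun x hx => Finset.mem_union_left _ hx
  have hq : ∀ d ∈ D, ∀ i, d.2.1 i ∈ W0 := fun d hd i => Finset.mem_union_right _
    (Finset.mem_biUnion.2 ⟨d, hd, Finset.mem_union_left _ (Finset.mem_image_of_mem _ (by simp))⟩)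
  have hq' : ∀ d ∈ D, ∀ i, d.2.2.1 i ∈ W0 := fun d hd i => Finset.mem_union_right _
    (Finset.mem_biUnion.2 ⟨d, hd, Finset.mem_union_right _ (Finset.mem_image_of_mem _ (by simp))⟩)
  obtain ⟨Y, hY, R', H⟩ := obg_ramsey (W := W0) (fun x y => R x y) (Q := D)
    (fun d => Fin d.1.1)
  obtain ⟨g, hg⟩ : ∃ g : Y → ℕ, Function.Injective g := by
    obtain ⟨k, ⟨e⟩⟩ := Finite.exists_equiv_fin Y
    exact ⟨fun y => (e y : ℕ), fun x y h => e.injective (Fin.ext h)⟩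
  let cY : Y → Fin m ⊕ Fin n → N := fun y =>
    Sum.elim (a (g y)) (b {k | ∃ y', g y' = k ∧ R' y' y})
  have hcY : ∀ x y, φ.Realize (Sum.elim (fun i => cY x (.inl i)) (fun i => cY y (.inr i))) ↔
      R' x y := by
    intro x y
    refine (hab (g x) {k | ∃ y', g y' = k ∧ R' y' y}).trans ?_
    constructor
    · rintro ⟨y', h1, h2⟩
      rwa [hg h1] at h2
    · intro h
      exact ⟨x, rfl, h⟩
  obtain ⟨E, hE, hχ⟩ := H (fun d y => d.1.2.2.2.Realize (fun v => cY (y v.1) v.2))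
  let c : W → Fin m ⊕ Fin n → N := fun w =>
    if h : w ∈ W0 then cY (E ⟨w, h⟩) else Sum.elim (a 0) (b ∅)
  have hc : ∀ (w : W) (h : w ∈ W0), c w = cY (E ⟨w, h⟩) := fun w h => dif_pos h
  refine ⟨c, ?_, ?_⟩
  · intro x hx y hy
    rw [hc x (hW1 x hx), hc y (hW1 y hy), hcY, hE]
  · intro d hd hs
    have := hχ ⟨d, hd⟩ (fun i => ⟨_, hq d hd i⟩) (fun i => ⟨_, hq' d hd i⟩) hs
    simp only [hc _ (hq d hd _), hc _ (hq' d hd _)]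
    exact this

theorem exists_general {L : FirstOrder.Language.{u, v}} (T : L.Theory)
    {m n : ℕ} (φ : L.Formula (Fin m ⊕ Fin n)) (hφ : FormulaHasIP T φ)
    {W : Type} [LinearOrder W] (R : W → W → Prop) :
    ∃ (M : FirstOrder.Language.Theory.ModelType.{u, v, max u v} T)
      (c : W → Fin m ⊕ Fin n → M),
      (∀ x y, φ.Realize (Sum.elim (fun i => c x (.inl i)) (fun i => c y (.inr i))) ↔ R x y) ∧
      ∀ (k : ℕ) (q q' : Fin k → W), (∀ i i', (q i ≤ q i' ↔ q' i ≤ q' i') ∧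
          (R (q i) (q i') ↔ R (q' i) (q' i'))) →
        ∀ ψ : L.Formula (Fin k × (Fin m ⊕ Fin n)),
        (ψ.Realize (fun v => c (q v.1) v.2) ↔ ψ.Realize (fun v => c (q' v.1) v.2)) := by
  classical
  obtain ⟨N, a, b, hab⟩ := hφ
  let I := Finset ((k : ℕ) × (Fin k → W) × (Fin k → W) × L.Formula (Fin k × (Fin m ⊕ Fin n))) ×
    Finset W
  choose c hc1 hc2 using fun d : I => exists_approx φ a b hab R d.1 d.2
  let U : Ultrafilter I := Ultrafilter.of Filter.atTop
  have hU : (U : Filter I) ≤ Filter.atTop := Ultrafilter.of_le _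
  let P := (U : Filter I).Product (fun _ => (N : Type (max u v)))
  have hP : P ⊨ T := by
    refine ⟨fun θ hθ => ?_⟩
    rw [FirstOrder.Language.Ultraproduct.sentence_realize]
    exact Filter.Eventually.of_forall fun _ => N.is_model.realize_of_mem θ hθ
  let C : W → Fin m ⊕ Fin n → P := fun w z => ((fun d => c d w z : ∀ _ : I, N) : P)
  have hC : ∀ {β : Type} (ψ : L.Formula β) (h : β → W) (z : β → Fin m ⊕ Fin n),
      ψ.Realize (fun v => C (h v) (z v)) ↔
        ∀ᶠ d in (U : Filter I), ψ.Realize (fun v => c d (h v) (z v)) := by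
    intro β ψ h z
    exact FirstOrder.Language.Ultraproduct.realize_formula_cast ψ (fun v d => c d (h v) (z v))
  refine ⟨FirstOrder.Language.Theory.ModelType.of T P, C, ?_, ?_⟩
  · intro x y
    have h1 : (Sum.elim (fun i => C x (.inl i)) (fun i => C y (.inr i))) =
        fun v : Fin m ⊕ Fin n => C (Sum.elim (fun _ => x) (fun _ => y) v) v := by
      funext v; rcases v with v | v <;> rfl
    have h2 : ∀ d, (Sum.elim (fun i => c d x (.inl i)) (fun i => c d y (.inr i))) =
        fun v : Fin m ⊕ Fin n => c d (Sum.elim (fun _ => x) (fun _ => y) v) v := by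
      intro d
      funext v; rcases v with v | v <;> rfl
    have h3 := hC φ (Sum.elim (fun _ => x) (fun _ => y)) id
    have h4 : ∀ᶠ d in (U : Filter I),
        (φ.Realize (fun v => c d (Sum.elim (fun _ => x) (fun _ => y) v) v) ↔ R x y) := by
      filter_upwards [hU (Filter.eventually_ge_atTop ((∅, {x, y}) : I))] with d hd
      rw [← h2]
      exact hc1 d x (hd.2 (by simp)) y (hd.2 (by simp))
    refine (iff_of_eq (congrArg (fun w : Fin m ⊕ Fin n → P => φ.Realize w) h1)).trans ?_
    refine h3.trans ((Filter.eventually_congr h4).trans ?_)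
    exact Filter.eventually_const
  · intro k q q' hs ψ
    refine (hC ψ (fun v => q v.1) (fun v => v.2)).trans
      (Iff.trans ?_ (hC ψ (fun v => q' v.1) (fun v => v.2)).symm)
    refine Filter.eventually_congr ?_
    filter_upwards [hU (Filter.eventually_ge_atTop (({⟨k, q, q', ψ⟩}, ∅) : I))] with d hd
    exact hc2 d ⟨k, q, q', ψ⟩ (hd.1 (by simp)) hs

def mixToSum (da db : ℕ) : (s : Bool) → MixVar da db s → Fin da ⊕ Fin db
  | true, w => .inl w
  | false, w => .inr w

def lexIdx (s : Bool) (q : ℚ) : ℚ ⊕ₗ ℚ := bif s then toLex (.inl q) else toLex (.inr q)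

def lexRel (R : ℚ → ℚ → Prop) (x y : ℚ ⊕ₗ ℚ) : Prop :=
  ∃ p q, x = toLex (.inl p) ∧ y = toLex (.inr q) ∧ R p q

/-- Lemma 1: If `φ(x̄; ȳ)` has the independence property, then there is a family
`(āᵢ, b̄ᵢ : i ∈ ℚ)` in some model `M` of `T`, indexed by the random ordered bipartite graph
`G*` (with edge relation `R`), such that `M ⊨ φ(āᵢ; b̄ⱼ)` iff `R i j`, and the family is
`L*`-indiscernible. -/
theorem exists_LStar_indiscernible_of_IP {L : FirstOrder.Language.{u, v}} (T : L.Theory)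
    (hT : T.IsComplete) {m n : ℕ} (φ : L.Formula (Fin m ⊕ Fin n)) (hφ : FormulaHasIP T φ)
    (R : ℚ → ℚ → Prop) (hR : IsRandomOBG R) :
    ∃ (M : FirstOrder.Language.Theory.ModelType.{u, v, max u v} T)
      (a : ℚ → Fin m → M) (b : ℚ → Fin n → M),
      (∀ i j : ℚ, φ.Realize (Sum.elim (a i) (b j)) ↔ R i j) ∧
        IsLStarIndiscernible (L := L) R a b := by
  obtain ⟨M, c, h1, h2⟩ := exists_general T φ hφ (lexRel R)
  refine ⟨M, fun i x => c (toLex (.inl i)) (.inl x), fun j y => c (toLex (.inr j)) (.inr y),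
    ?_, ?_⟩
  · intro i j
    rw [h1]
    constructor
    · rintro ⟨p, q, hp, hq, h⟩
      obtain rfl := Sum.inl_injective (toLex.injective hp)
      obtain rfl := Sum.inr_injective (toLex.injective hq)
      exact h
    · intro h
      exact ⟨i, j, rfl, rfl, h⟩
  · intro k s q q' hs ψ
    have h3 := h2 k (fun i => lexIdx (s i) (q i)) (fun i => lexIdx (s i) (q' i)) (by
      intro i i'
      have h4 := hs i i'
      simp only [mkIdx] at h4
      rcases hi : s i <;> rcases hi' : s i' <;>
        simp [hi, hi', SamePairType, lexIdx, lexRel, Sum.Lex.inl_le_inl_iff,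
          Sum.Lex.inr_le_inr_iff] at h4 ⊢ <;> tauto)
      (ψ.relabel (fun v => (v.1, mixToSum m n (s v.1) v.2)))
    rw [FirstOrder.Language.Formula.realize_relabel,
      FirstOrder.Language.Formula.realize_relabel] at h3
    have h5 : ∀ q : Fin k → ℚ, (fun v : (k : Fin k) × MixVar m n (s k) =>
        pickSide (fun x => c (toLex (.inl (q v.1))) (.inl x))
          (fun y => c (toLex (.inr (q v.1))) (.inr y)) (s v.1) v.2) =
        (fun v : Fin k × (Fin m ⊕ Fin n) => c (lexIdx (s v.1) (q v.1)) v.2) ∘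
          (fun v : (k : Fin k) × MixVar m n (s k) => (v.1, mixToSum m n (s v.1) v.2)) := by
      intro q
      funext ⟨i, w⟩
      simp only [Function.comp]
      generalize s i = t at w
      cases t <;> rfl
    rw [h5 q, h5 q']
    exact h3
end

section
/- A complete first-order theory T is NIP if and only if for every family (āᵢ, b̄ᵢ : i ∈ ℚ) of tuples in a model of T which is L*-indiscernible when indexed by the random ordered bipartite graph G*, the two sequences (āᵢ : i ∈ ℚ) and (b̄ᵢ : i ∈ ℚ) are mutually indiscernible. -/
open FirstOrder FirstOrder.Language

universe u v

section UltraSemigroup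

open Filter

attribute [local instance] Ultrafilter.mul Ultrafilter.semigroup

theorem obg_exists_min_idem {M : Type*} [Nonempty M] [Semigroup M]
    [TopologicalSpace M] [CompactSpace M] [T2Space M]
    (hc : ∀ r : M, Continuous (· * r)) :
    ∃ p : M, p * p = p ∧ ∀ p' : M, p' * p' = p' → p * p' = p' → p' * p = p' → p' = p := by
  let S : Set (Set M) :=
    { N | IsClosed N ∧ N.Nonempty ∧ ∀ (m : M) (m') (_ : m' ∈ N), m * m' ∈ N }
  have hex : ∃ N', Minimal (· ∈ S) N' := by
    refine zorn_superset _ fun c hcs hc => ?_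
    refine
      ⟨⋂₀ c, ⟨isClosed_sInter fun t ht => (hcs ht).1, ?_, fun m m' hm' => ?_⟩, fun s hs =>
        Set.sInter_subset_of_mem hs⟩
    · obtain rfl | hcnemp := c.eq_empty_or_nonempty
      · rw [Set.sInter_empty]
        apply Set.univ_nonempty
      convert!
        @IsCompact.nonempty_iInter_of_directed_nonempty_isCompact_isClosed _ _ _ hcnemp.coe_sort
          ((↑) : c → Set M) ?_ ?_ ?_ ?_
      · exact Set.sInter_eq_iInter
      · refine DirectedOn.directed_val (IsChain.directedOn hc.symm)
      exacts [fun i => (hcs i.prop).2.1, fun i => (hcs i.prop).1.isCompact, fun i => (hcs i.prop).1]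
    · rw [Set.mem_sInter]
      exact fun t ht => (hcs ht).2.2 m m' (Set.mem_sInter.mp hm' t ht)
  obtain ⟨N, hN⟩ := hex
  obtain ⟨Ncl, Nne, Nmul⟩ := hN.prop
  obtain ⟨p, hpN, hp⟩ := exists_idempotent_in_compact_subsemigroup hc N Nne Ncl.isCompact
    (fun x _ y hy => Nmul x y hy)
  refine ⟨p, hp, fun p' h1 h2 h3 => ?_⟩
  have hp'N : p' ∈ N := h3 ▸ Nmul p' p hpN
  have hEq : Set.range (· * p') = N := by
    apply hN.eq_of_subset
    · refine ⟨?_, ⟨_, ⟨p', rfl⟩⟩, ?_⟩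
      · rw [← Set.image_univ]
        exact (hc p').isClosedMap _ isClosed_univ
      · rintro m _ ⟨x, rfl⟩
        exact ⟨m * x, mul_assoc _ _ _⟩
    · rintro _ ⟨x, rfl⟩
      exact Nmul _ _ hp'N
  rw [← hEq] at hpN
  obtain ⟨s, hs⟩ := hpN
  have hs' : s * p' = p := hs
  rw [← h2, ← hs', mul_assoc, h1]

theorem obg_map_mul {M N : Type*} [Semigroup M] [Semigroup N] (f : M → N)
    (hf : ∀ x y, f (x * y) = f x * f y) (U V : Ultrafilter M) :
    (U * V).map f = U.map f * V.map f := by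
  apply Ultrafilter.coe_inj.mp
  refine Filter.ext' fun p => ?_
  rw [Ultrafilter.eventually_mul, Ultrafilter.coe_map, Ultrafilter.coe_map, Ultrafilter.coe_map,
    Filter.eventually_map, Filter.eventually_map, Ultrafilter.eventually_mul]
  simp only [Filter.eventually_map, hf]

/-- substitution of a letter for the variable -/
def obgSubst {A : Type*} (x : A) : FreeMonoid (Option A) →* FreeMonoid A :=
  FreeMonoid.map (fun o => o.getD x)

theorem obg_exists_pq (A : Type*) [Nonempty A] :
    ∃ (p : Ultrafilter (FreeMonoid A)) (q : Ultrafilter (FreeMonoid (Option A))),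
      (∀ P : FreeMonoid A → Prop,
        (∀ᶠ w in p, ∀ᶠ u in p, P (w * u)) ↔ ∀ᶠ w in p, P w) ∧
      (∀ P : FreeMonoid (Option A) → Prop,
        (∀ᶠ w in p, ∀ᶠ u in q, P (FreeMonoid.map some w * u)) ↔ ∀ᶠ w in q, P w) ∧
      (∀ x : A, ∀ P : FreeMonoid A → Prop,
        (∀ᶠ w in q, P (obgSubst x w)) ↔ ∀ᶠ w in p, P w) ∧
      (∀ᶠ w in (q : Filter (FreeMonoid (Option A))), none ∈ FreeMonoid.toList w) := by
  obtain ⟨p, hp, hmin⟩ := obg_exists_min_idem (M := Ultrafilter (FreeMonoid A))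
    Ultrafilter.continuous_mul_left
  let i : FreeMonoid A →* FreeMonoid (Option A) := FreeMonoid.map some
  let P := p.map i
  have hP : P * P = P := by
    rw [← obg_map_mul i (map_mul i), hp]
  let V : Set (FreeMonoid (Option A)) := {w | none ∈ FreeMonoid.toList w}
  let C : Set (Ultrafilter (FreeMonoid (Option A))) := {U | V ∈ U}
  have hCl : ∀ U X, X ∈ C → U * X ∈ C := by
    intro U X hX
    change ∀ᶠ w in (U * X : Ultrafilter _), w ∈ V
    rw [Ultrafilter.eventually_mul]
    refine Filter.Eventually.of_forall fun w => ?_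
    refine Filter.Eventually.mono (show ∀ᶠ u in X, u ∈ V from hX) fun u hu => ?_
    simp only [V, Set.mem_ofPred_eq, FreeMonoid.toList_mul, List.mem_append] at hu ⊢
    exact Or.inr hu
  have hCr : ∀ U X, X ∈ C → X * U ∈ C := by
    intro U X hX
    change ∀ᶠ w in (X * U : Ultrafilter _), w ∈ V
    rw [Ultrafilter.eventually_mul]
    refine Filter.Eventually.mono (show ∀ᶠ u in X, u ∈ V from hX) fun u hu => ?_
    refine Filter.Eventually.of_forall fun w => ?_
    simp only [V, Set.mem_ofPred_eq, FreeMonoid.toList_mul, List.mem_append] at hu ⊢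
    exact Or.inl hu
  have hCne : (pure (FreeMonoid.of none) : Ultrafilter (FreeMonoid (Option A))) ∈ C := by
    change V ∈ (pure (FreeMonoid.of none) : Ultrafilter (FreeMonoid (Option A)))
    rw [Ultrafilter.mem_pure]
    simp [V]
  obtain ⟨r, ⟨U, hU, hUr⟩, hr⟩ := exists_idempotent_in_compact_subsemigroup
    (Ultrafilter.continuous_mul_left (M := FreeMonoid (Option A))) ((· * P) '' C)
    ⟨_, _, hCne, rfl⟩
    ((ultrafilter_isClosed_basic V).isCompact.image (Ultrafilter.continuous_mul_left P))
    (by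
      rintro _ ⟨X, hX, rfl⟩ _ ⟨Y, hY, rfl⟩
      exact ⟨X * P * Y, hCl _ _ hY, mul_assoc _ _ _⟩)
  have hUr' : U * P = r := hUr
  have hrP : r * P = r := by rw [← hUr', mul_assoc, hP]
  have hPq : P * (P * r) = P * r := by rw [← mul_assoc, hP]
  have hqP : (P * r) * P = P * r := by rw [mul_assoc, hrP]
  have hqq : (P * r) * (P * r) = P * r := by
    rw [← mul_assoc, hqP, mul_assoc, hr]
  refine ⟨p, P * r, ?_, ?_, ?_, ?_⟩
  · intro Q
    rw [← Ultrafilter.eventually_mul, hp]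
  · intro Q
    conv_rhs => rw [← hPq, Ultrafilter.eventually_mul]
    rfl
  · intro x Q
    have hs : (P.map (obgSubst x)) = p := by
      apply Ultrafilter.coe_inj.mp
      refine Filter.ext' fun p => ?_
      simp only [P, Ultrafilter.coe_map, Filter.eventually_map]
      have : ∀ w, (obgSubst x) (i w) = w := by
        intro w
        apply FreeMonoid.toList.injective
        simp [obgSubst, i, FreeMonoid.toList_map]
      simp only [this]
    have := hmin ((P * r).map (obgSubst x)) (by
      rw [← obg_map_mul (obgSubst x) (map_mul _), hqq]) (by
      conv_lhs => rw [← hs]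
      rw [← obg_map_mul (obgSubst x) (map_mul _), hPq]) (by
      conv_lhs => rw [← hs]
      rw [← obg_map_mul (obgSubst x) (map_mul _), hqP])
    rw [← this, Ultrafilter.coe_map, Filter.eventually_map]
  · have h1 : P * r ∈ C := hCl P r (hUr' ▸ hCr P U hU)
    exact h1

end UltraSemigroup

section ObgProcess

open Filter Classical

/-- Alphabet. -/
abbrev ObgA : Type := ℕ → Bool

/-- The pair of idempotents. -/
structure ObgPQ where
  p : Ultrafilter (FreeMonoid ObgA)
  q : Ultrafilter (FreeMonoid (Option ObgA))
  hp : ∀ P : FreeMonoid ObgA → Prop,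
        (∀ᶠ w in p, ∀ᶠ u in p, P (w * u)) ↔ ∀ᶠ w in p, P w
  hpq : ∀ P : FreeMonoid (Option ObgA) → Prop,
        (∀ᶠ w in p, ∀ᶠ u in q, P (FreeMonoid.map some w * u)) ↔ ∀ᶠ w in q, P w
  hsub : ∀ x : ObgA, ∀ P : FreeMonoid ObgA → Prop,
        (∀ᶠ w in q, P (obgSubst x w)) ↔ ∀ᶠ w in p, P w
  hvar : ∀ᶠ w in (q : Filter (FreeMonoid (Option ObgA))), none ∈ FreeMonoid.toList w

noncomputable def obgPos (w : FreeMonoid (Option ObgA)) : ℕ := (FreeMonoid.toList w).idxOf none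

def obgLen {A : Type*} (w : FreeMonoid A) : ℕ := (FreeMonoid.toList w).length

noncomputable def obgExt {κ : Type*} (K : Set κ) (w : FreeMonoid (Option ObgA))
    (m : κ → Option ℕ) : κ → Option ℕ :=
  fun k => if k ∈ K then some (obgPos w) else (m k).map (obgLen w + ·)

noncomputable def obgCol (c : ObgPQ) {κ : Type*} :
    List (Set κ × ObgA) → Ultrafilter (FreeMonoid ObgA × (κ → Option ℕ))
  | [] => c.p.map (fun w => (w, fun _ => none))
  | (e :: L) => c.q.bind (fun w => (obgCol c L).map
      (fun s => (obgSubst e.2 w * s.1, obgExt e.1 w s.2)))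

theorem obgCol_nil (c : ObgPQ) {κ : Type*} (E : FreeMonoid ObgA × (κ → Option ℕ) → Prop) :
    (∀ᶠ s in (obgCol c (κ := κ) []).toFilter, E s) ↔ ∀ᶠ w in c.p, E (w, fun _ => none) :=
  Iff.rfl

theorem obgCol_cons (c : ObgPQ) {κ : Type*} (e : Set κ × ObgA) (L : List (Set κ × ObgA))
    (E : FreeMonoid ObgA × (κ → Option ℕ) → Prop) :
    (∀ᶠ s in (obgCol c (e :: L)).toFilter, E s) ↔
      ∀ᶠ w in c.q, ∀ᶠ s in (obgCol c L).toFilter, E (obgSubst e.2 w * s.1, obgExt e.1 w s.2) :=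
  Iff.rfl

theorem obgCol_comp (c : ObgPQ) {κ κ' : Type*} (x : κ' → κ) (L : List (Set κ × ObgA)) :
    ∀ (E : FreeMonoid ObgA × (κ' → Option ℕ) → Prop),
    (∀ᶠ s in (obgCol c L).toFilter, E (s.1, s.2 ∘ x)) ↔
      ∀ᶠ s in (obgCol c (L.map (fun e => (x ⁻¹' e.1, e.2)))).toFilter, E s := by
  induction L with
  | nil => intro E; exact Iff.rfl
  | cons e L ih =>
    intro E
    rw [List.map_cons, obgCol_cons, obgCol_cons]
    refine Filter.eventually_congr (Filter.Eventually.of_forall fun w => ?_)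
    exact ih (fun s => E (obgSubst e.2 w * s.1, obgExt (x ⁻¹' e.1) w s.2))

theorem obgPos_mul (w0 : FreeMonoid ObgA) (w : FreeMonoid (Option ObgA)) :
    obgPos (FreeMonoid.map some w0 * w) = obgLen w0 + obgPos w := by
  unfold obgPos obgLen
  rw [FreeMonoid.toList_mul, List.idxOf_append_of_notMem]
  · simp [FreeMonoid.toList_map]
  · simp [FreeMonoid.toList_map]

theorem obgLen_mul {A : Type*} (w w' : FreeMonoid A) : obgLen (w * w') = obgLen w + obgLen w' := by
  simp [obgLen]

theorem obgLen_map {A B : Type*} (f : A → B) (w : FreeMonoid A) :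
    obgLen (FreeMonoid.map f w) = obgLen w := by
  simp [obgLen, FreeMonoid.toList_map]

theorem obgSubst_map (x : ObgA) (w : FreeMonoid ObgA) :
    obgSubst x (FreeMonoid.map some w) = w := by
  apply FreeMonoid.toList.injective
  simp [obgSubst, FreeMonoid.toList_map]

theorem obgCol_inv (c : ObgPQ) {κ : Type*} (L : List (Set κ × ObgA))
    (E : FreeMonoid ObgA × (κ → Option ℕ) → Prop) :
    (∀ᶠ w0 in c.p, ∀ᶠ s in (obgCol c L).toFilter,
      E (w0 * s.1, fun k => (s.2 k).map (obgLen w0 + ·))) ↔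
      ∀ᶠ s in (obgCol c L).toFilter, E s := by
  cases L with
  | nil => exact c.hp (fun w => E (w, fun _ => none))
  | cons e L =>
    rw [obgCol_cons, ← c.hpq]
    refine Filter.eventually_congr (Filter.Eventually.of_forall fun w0 => ?_)
    rw [obgCol_cons]
    refine Filter.eventually_congr (Filter.Eventually.of_forall fun w => ?_)
    refine Filter.eventually_congr (Filter.Eventually.of_forall fun s => ?_)
    rw [map_mul, obgSubst_map, mul_assoc]
    have : (fun k => (obgExt e.1 w s.2 k).map (obgLen w0 + ·))
        = obgExt e.1 (FreeMonoid.map some w0 * w) s.2 := by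
      funext k
      unfold obgExt
      split_ifs
      · simp [obgPos_mul]
      · rw [Option.map_map, obgLen_mul, obgLen_map]
        congr 1
        funext n
        simp [add_assoc]
    rw [this]

theorem obgCol_empty (c : ObgPQ) {κ : Type*} (x : ObgA) (L : List (Set κ × ObgA))
    (E : FreeMonoid ObgA × (κ → Option ℕ) → Prop) :
    (∀ᶠ s in (obgCol c ((∅, x) :: L)).toFilter, E s) ↔
      ∀ᶠ s in (obgCol c L).toFilter, E s := by
  rw [obgCol_cons, ← obgCol_inv c L, ← c.hsub x]
  refine Filter.eventually_congr (Filter.Eventually.of_forall fun w => ?_)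
  refine Filter.eventually_congr (Filter.Eventually.of_forall fun s => ?_)
  have : obgExt ∅ w s.2 = (fun k => (s.2 k).map (obgLen (obgSubst x w) + ·)) := by
    funext k
    simp [obgExt, obgSubst, obgLen_map]
  rw [this]

theorem obgCol_filter (c : ObgPQ) {κ ι : Type*} (K : ι → Set κ) (l : ι → ObgA) (J : List ι) :
    ∀ (E : FreeMonoid ObgA × (κ → Option ℕ) → Prop),
    (∀ᶠ s in (obgCol c (J.map fun j => (K j, l j))).toFilter, E s) ↔
      ∀ᶠ s in (obgCol c ((J.filter (fun j => decide (K j).Nonempty)).map fun j => (K j, l j))).toFilter, E s := by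
  induction J with
  | nil => intro E; exact Iff.rfl
  | cons j J ih =>
    intro E
    by_cases h : (K j).Nonempty
    · rw [List.filter_cons_of_pos (by simpa using h), List.map_cons, List.map_cons, obgCol_cons,
        obgCol_cons]
      refine Filter.eventually_congr (Filter.Eventually.of_forall fun w => ?_)
      exact ih (fun s => E (obgSubst (l j) w * s.1, obgExt (K j) w s.2))
    · rw [List.filter_cons_of_neg (by simpa using h), List.map_cons,
        Set.not_nonempty_iff_eq_empty.1 h, obgCol_empty]
      exact ih E

/-- Row of a word -/
def obgRow (r : ℕ) : FreeMonoid ObgA →* FreeMonoid Bool := FreeMonoid.map (fun x => x r)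

theorem obgRow_subst (r : ℕ) (x y : ObgA) (h : x r = y r) (w : FreeMonoid (Option ObgA)) :
    obgRow r (obgSubst x w) = obgRow r (obgSubst y w) := by
  apply FreeMonoid.toList.injective
  simp only [obgRow, obgSubst, FreeMonoid.toList_map, List.map_map]
  congr 1
  funext o
  cases o <;> simp [h]

theorem obgCol_congr (c : ObgPQ) {κ ι : Type*} (Y : Set ℕ) (K : ι → Set κ) (l l' : ι → ObgA)
    (J : List ι) (hJ : ∀ j ∈ J, ∀ r ∈ Y, l j r = l' j r) :
    ∀ (E : FreeMonoid ObgA × (κ → Option ℕ) → Prop)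
    (_ : ∀ u u' m, (∀ r ∈ Y, obgRow r u = obgRow r u') → (E (u, m) ↔ E (u', m))),
    (∀ᶠ s in (obgCol c (J.map fun j => (K j, l j))).toFilter, E s) ↔
      ∀ᶠ s in (obgCol c (J.map fun j => (K j, l' j))).toFilter, E s := by
  induction J with
  | nil => intro E hE; exact Iff.rfl
  | cons j J ih =>
    intro E hE
    rw [List.map_cons, List.map_cons, obgCol_cons, obgCol_cons]
    refine Filter.eventually_congr (Filter.Eventually.of_forall fun w => ?_)
    rw [ih (fun j' hj' => hJ j' (List.mem_cons_of_mem _ hj'))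
      (fun s => E (obgSubst (l j) w * s.1, obgExt (K j) w s.2))]
    · refine Filter.eventually_congr (Filter.Eventually.of_forall fun s => ?_)
      apply hE
      intro r hr
      rw [map_mul, map_mul, obgRow_subst r _ _ (hJ j List.mem_cons_self r hr)]
    · intro u u' m h
      apply hE
      intro r hr
      rw [map_mul, map_mul, h r hr]

theorem obgCol_mark (c : ObgPQ) {κ ι : Type*} (K : ι → Set κ) (l : ι → ObgA) (k : κ) (j0 : ι)
    (hk : k ∈ K j0) (J : List ι) (h0 : j0 ∈ J) (hJ : ∀ j ∈ J, k ∈ K j → j = j0) :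
    ∀ᶠ s in (obgCol c (J.map fun j => (K j, l j))).toFilter,
      ∃ v, s.2 k = some v ∧ (FreeMonoid.toList s.1)[v]? = some (l j0) := by
  induction J with
  | nil => simp at h0
  | cons j J ih =>
    rw [List.map_cons, obgCol_cons]
    by_cases hj : j = j0
    · subst hj
      refine c.hvar.mono fun w hw => Filter.Eventually.of_forall fun s => ⟨obgPos w, ?_, ?_⟩
      · simp [obgExt, hk]
      · have hlt : obgPos w < (FreeMonoid.toList w).length := List.idxOf_lt_length_iff.2 hw
        have hg : (FreeMonoid.toList w)[obgPos w] = none := List.getElem_idxOf hlt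
        simp only [FreeMonoid.toList_mul, obgSubst, FreeMonoid.toList_map]
        rw [List.getElem?_append_left (by simpa using hlt), List.getElem?_map,
          List.getElem?_eq_getElem hlt, hg]
        rfl
    · have h0' : j0 ∈ J := by
        rcases List.mem_cons.1 h0 with h | h
        · exact absurd h.symm hj
        · exact h
      have hkj : k ∉ K j := fun h => hj (hJ j List.mem_cons_self h)
      refine Filter.Eventually.of_forall fun w => ?_
      refine (ih h0' (fun j' hj' => hJ j' (List.mem_cons_of_mem _ hj'))).mono ?_
      rintro s ⟨v, hv1, hv2⟩
      refine ⟨obgLen w + v, ?_, ?_⟩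
      · simp [obgExt, hkj, hv1]
      · simp only [FreeMonoid.toList_mul, obgSubst, FreeMonoid.toList_map]
        rw [List.getElem?_append_right (by simp [obgLen])]
        simpa [obgLen] using hv2

/-! rows -/

noncomputable def obgRowU {κ : Type*} : List (Set κ) → Ultrafilter (κ → Option ℕ)
  | [] => pure (fun _ => none)
  | (K :: L) => (Filter.hyperfilter ℕ).bind (fun r => (obgRowU L).map
      (fun f k => if k ∈ K then some r else f k))

theorem obgRowU_cons {κ : Type*} (K : Set κ) (L : List (Set κ)) (E : (κ → Option ℕ) → Prop) :
    (∀ᶠ f in (obgRowU (K :: L)).toFilter, E f) ↔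
      ∀ᶠ r in (Filter.hyperfilter ℕ : Filter ℕ), ∀ᶠ f in (obgRowU L).toFilter,
        E (fun k => if k ∈ K then some r else f k) :=
  Iff.rfl

theorem obgRowU_comp {κ κ' : Type*} (x : κ' → κ) (L : List (Set κ)) :
    ∀ (E : (κ' → Option ℕ) → Prop),
    (∀ᶠ f in (obgRowU L).toFilter, E (f ∘ x)) ↔
      ∀ᶠ f in (obgRowU (L.map (fun e => x ⁻¹' e))).toFilter, E f := by
  induction L with
  | nil => intro E; exact Iff.rfl
  | cons e L ih =>
    intro E
    rw [List.map_cons, obgRowU_cons, obgRowU_cons]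
    refine Filter.eventually_congr (Filter.Eventually.of_forall fun r => ?_)
    exact ih (fun f => E (fun k => if k ∈ x ⁻¹' e then some r else f k))

theorem obgRowU_filter {κ : Type*} (L : List (Set κ)) :
    ∀ (E : (κ → Option ℕ) → Prop),
    (∀ᶠ f in (obgRowU L).toFilter, E f) ↔
      ∀ᶠ f in (obgRowU (L.filter (fun K => decide K.Nonempty))).toFilter, E f := by
  induction L with
  | nil => intro E; exact Iff.rfl
  | cons K L ih =>
    intro E
    by_cases h : K.Nonempty
    · rw [List.filter_cons_of_pos (by simpa using h), obgRowU_cons, obgRowU_cons]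
      refine Filter.eventually_congr (Filter.Eventually.of_forall fun w => ?_)
      exact ih _
    · rw [List.filter_cons_of_neg (by simpa using h), obgRowU_cons,
        Set.not_nonempty_iff_eq_empty.1 h, ← ih]
      simp

theorem obgRowU_some {κ : Type*} (L : List (Set κ)) (k : κ) (K : Set κ) (hK : K ∈ L)
    (hk : k ∈ K) : ∀ᶠ f in (obgRowU L).toFilter, ∃ r, f k = some r := by
  induction L with
  | nil => simp at hK
  | cons K' L ih =>
    rw [obgRowU_cons]
    refine Filter.Eventually.of_forall fun r => ?_
    by_cases h : k ∈ K'
    · exact Filter.Eventually.of_forall fun f => ⟨r, by simp [h]⟩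
    · have : K ∈ L := by
        rcases List.mem_cons.1 hK with rfl | h'
        · exact absurd hk h
        · exact h'
      refine (ih this).mono fun f hf => ?_
      simpa [h] using hf

theorem obgRowU_avoid {κ : Type*} (L : List (Set κ)) (r : ℕ) :
    ∀ᶠ f in (obgRowU L).toFilter, ∀ k, f k ≠ some r := by
  induction L with
  | nil =>
    change ∀ᶠ f in (pure (fun _ => none) : Filter (κ → Option ℕ)), _
    simp
  | cons K L ih =>
    rw [obgRowU_cons]
    have : ∀ᶠ r' in (Filter.hyperfilter ℕ : Filter ℕ), r' ≠ r :=
      Filter.compl_mem_hyperfilter_of_finite (Set.finite_singleton r)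
    refine this.mono fun r' hr' => ih.mono fun f hf k => ?_
    by_cases h : k ∈ K
    · simpa [h] using hr'
    · simpa [h] using hf k

theorem obgRowU_inj {κ : Type*} (L : List (Set κ)) :
    ∀ᶠ f in (obgRowU L).toFilter, ∀ k k', f k = f k' → f k ≠ none →
      ∃ K ∈ L, k ∈ K ∧ k' ∈ K := by
  induction L with
  | nil =>
    change ∀ᶠ f in (pure (fun _ => none) : Filter (κ → Option ℕ)), _
    simp
  | cons K L ih =>
    rw [obgRowU_cons]
    refine Filter.Eventually.of_forall fun r => ?_
    refine (ih.and (obgRowU_avoid L r)).mono ?_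
    rintro f ⟨h1, h2⟩ k k' he hn
    by_cases hk : k ∈ K <;> by_cases hk' : k' ∈ K
    · exact ⟨K, List.mem_cons_self, hk, hk'⟩
    · simp only [hk, hk', if_true, if_false] at he
      exact absurd he.symm (h2 _)
    · simp only [hk, hk', if_true, if_false] at he
      exact absurd he (h2 _)
    · simp only [hk, hk', if_false] at he hn
      obtain ⟨K', h, h'⟩ := h1 k k' he hn
      exact ⟨K', List.mem_cons_of_mem _ h, h'⟩

end ObgProcess

section ObgMain

open Filter Classical

noncomputable def obgCls {n : ℕ} (x : Fin n → GStarIdx) (c : ℚ → GStarIdx) (I : Finset ℚ) :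
    List (Set (Fin n)) :=
  ((I.sort (· ≤ ·)).map (fun i => x ⁻¹' {c i})).filter (fun K => decide K.Nonempty)

theorem obgCls_mem {n : ℕ} (x : Fin n → GStarIdx) (c : ℚ → GStarIdx) (I : Finset ℚ)
    (K : Set (Fin n)) : K ∈ obgCls x c I ↔ (∃ i ∈ I, x ⁻¹' {c i} = K) ∧ K.Nonempty := by
  simp [obgCls, List.mem_filter]

/-- the transfer hypothesis -/
def ObgTr {n : ℕ} (c : ℚ → GStarIdx) (x x' : Fin n → GStarIdx) : Prop :=
  ∀ k k' i i', x k = c i → x k' = c i' → ∃ j j', x' k = c j ∧ x' k' = c j' ∧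
    (i < i' → j < j') ∧ (i = i' → j = j')

/-- the order on classes -/
def obgLt {n : ℕ} (c : ℚ → GStarIdx) (x : Fin n → GStarIdx) (K K' : Set (Fin n)) : Prop :=
  ∃ k ∈ K, ∃ k' ∈ K', ∃ i i', x k = c i ∧ x k' = c i' ∧ i < i'

theorem obgCls_pairwise {n : ℕ} (x : Fin n → GStarIdx) (c : ℚ → GStarIdx)
    (I : Finset ℚ) : (obgCls x c I).Pairwise (obgLt c x) := by
  unfold obgCls
  rw [List.pairwise_filter, List.pairwise_map]
  have h : (I.sort (· ≤ ·)).Pairwise (· < ·) := (Finset.sortedLT_sort I).pairwise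
  refine h.imp ?_
  intro i i' hlt h1 h2
  simp only [decide_eq_true_eq] at h1 h2
  obtain ⟨k, hk⟩ := h1
  obtain ⟨k', hk'⟩ := h2
  exact ⟨k, hk, k', hk', i, i', hk, hk', hlt⟩

theorem obgCls_nodup {n : ℕ} (x : Fin n → GStarIdx) (c : ℚ → GStarIdx)
    (hc : Function.Injective c) (I : Finset ℚ) : (obgCls x c I).Nodup := by
  refine List.Pairwise.imp_of_mem ?_ (obgCls_pairwise x c I)
  rintro K K' hK _ ⟨k, hk, k', hk', i, i', h1, h2, hlt⟩ rfl
  obtain ⟨⟨i0, _, rfl⟩, _⟩ := (obgCls_mem _ _ _ _).1 hK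
  have e1 : x k = c i0 := hk
  have e2 : x k' = c i0 := hk'
  have := hc (h1.symm.trans e1)
  have := hc (h2.symm.trans e2)
  exact absurd hlt (by simp [*])

theorem obgCls_sub {n : ℕ} (x x' : Fin n → GStarIdx) (c : ℚ → GStarIdx)
    (hc : Function.Injective c) (I : Finset ℚ) (h : ObgTr c x x') (h' : ObgTr c x' x)
    (hI' : ∀ k i, x' k = c i → i ∈ I) (K : Set (Fin n)) (hK : K ∈ obgCls x c I) :
    K ∈ obgCls x' c I := by
  rw [obgCls_mem] at hK ⊢
  obtain ⟨⟨i, hi, rfl⟩, ⟨k, hk⟩⟩ := hK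
  refine ⟨?_, ⟨k, hk⟩⟩
  have hk' : x k = c i := hk
  obtain ⟨j, j', e1, e2, -, -⟩ := h k k i i hk' hk'
  refine ⟨j, hI' k j e1, ?_⟩
  ext l
  simp only [Set.mem_preimage, Set.mem_singleton_iff]
  constructor
  · intro hl
    obtain ⟨a, b, f1, f2, -, f3⟩ := h' k l j j e1 hl
    rw [f2, ← f3 rfl, ← f1, hk']
  · intro hl
    obtain ⟨a, b, f1, f2, -, f3⟩ := h k l i i hk' hl
    rw [f2, ← f3 rfl, ← f1, e1]

theorem obgCls_eq {n : ℕ} (x x' : Fin n → GStarIdx) (c : ℚ → GStarIdx)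
    (hc : Function.Injective c) (I : Finset ℚ) (h : ObgTr c x x') (h' : ObgTr c x' x)
    (hI : ∀ k i, x k = c i → i ∈ I) (hI' : ∀ k i, x' k = c i → i ∈ I) :
    obgCls x c I = obgCls x' c I := by
  have hperm : (obgCls x c I).Perm (obgCls x' c I) :=
    (List.perm_ext_iff_of_nodup (obgCls_nodup x c hc I) (obgCls_nodup x' c hc I)).2
      fun K => ⟨obgCls_sub x x' c hc I h h' hI' K, obgCls_sub x' x c hc I h' h hI K⟩
  have hlt : ∀ K K', obgLt c x' K K' → obgLt c x K K' := by
    rintro K K' ⟨k, hk, k', hk', i, i', e1, e2, hl⟩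
    obtain ⟨j, j', f1, f2, f3, -⟩ := h' k k' i i' e1 e2
    exact ⟨k, hk, k', hk', j, j', f1, f2, f3 hl⟩
  refine List.Perm.eq_of_pairwise (le := obgLt c x) ?_ (obgCls_pairwise x c I)
    ((obgCls_pairwise x' c I).imp (hlt _ _)) hperm
  rintro K K' hK hK' ⟨k, hk, k', hk', i, i', e1, e2, hl⟩ ⟨l', hl', l, hll, a', a, f1, f2, hl2⟩
  rw [← hperm.mem_iff] at hK'
  obtain ⟨⟨i0, _, rfl⟩, _⟩ := (obgCls_mem _ _ _ _).1 hK
  obtain ⟨⟨i1, _, rfl⟩, _⟩ := (obgCls_mem _ _ _ _).1 hK'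
  have a1 := hc (e1.symm.trans (show x k = c i0 from hk))
  have a2 := hc (e2.symm.trans (show x k' = c i1 from hk'))
  have a3 := hc (f1.symm.trans (show x l' = c i1 from hl'))
  have a4 := hc (f2.symm.trans (show x l = c i0 from hll))
  subst a1 a2 a3 a4
  exact absurd hl (not_lt.2 hl2.le)

noncomputable def obgLam (R : ℚ → ℚ → Prop) (f : GStarIdx → Option ℕ) (j : ℚ) : ObgA :=
  fun r => decide (∃ i, f (Sum.inl i) = some r ∧ R i j)

noncomputable def obgLam' (R : ℚ → ℚ → Prop) {n : ℕ} (x : Fin n → GStarIdx)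
    (g : Fin n → Option ℕ) (K : Set (Fin n)) : ObgA :=
  fun r => decide (∃ k k' i j, g k = some r ∧ k' ∈ K ∧ x k = Sum.inl i ∧ x k' = Sum.inr j ∧ R i j)

noncomputable def obgPV (c : ObgPQ) (R : ℚ → ℚ → Prop) (I J : Finset ℚ) :
    Ultrafilter ((GStarIdx → Option ℕ) × (FreeMonoid ObgA × (GStarIdx → Option ℕ))) :=
  (obgRowU ((I.sort (· ≤ ·)).map (fun i => {Sum.inl i}))).bind fun f =>
    (obgCol c ((J.sort (· ≤ ·)).map (fun j => ({Sum.inr j}, obgLam R f j)))).map fun s => (f, s)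

theorem obgPV_ev (c : ObgPQ) (R : ℚ → ℚ → Prop) (I J : Finset ℚ)
    (E : (GStarIdx → Option ℕ) × (FreeMonoid ObgA × (GStarIdx → Option ℕ)) → Prop) :
    (∀ᶠ t in (obgPV c R I J).toFilter, E t) ↔
    ∀ᶠ f in (obgRowU ((I.sort (· ≤ ·)).map (fun i => {Sum.inl i}))).toFilter,
      ∀ᶠ s in (obgCol c ((J.sort (· ≤ ·)).map (fun j => ({Sum.inr j}, obgLam R f j)))).toFilter,
        E (f, s) := Iff.rfl

def obgRd (u : FreeMonoid ObgA) : Option ℕ → FreeMonoid Bool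
  | none => 1
  | some r => obgRow r u

theorem obgRowU_inj' (I : Finset ℚ) :
    ∀ᶠ f in (obgRowU ((I.sort (· ≤ ·)).map
      (fun i => ({Sum.inl i} : Set GStarIdx)))).toFilter,
      ∀ z z', f z = f z' → f z ≠ none → ∃ i, z = Sum.inl i ∧ z' = Sum.inl i := by
  refine (obgRowU_inj _).mono fun f hf z z' h1 h2 => ?_
  obtain ⟨K, hK, hz, hz'⟩ := hf z z' h1 h2
  simp only [List.mem_map] at hK
  obtain ⟨i, -, rfl⟩ := hK
  exact ⟨i, hz, hz'⟩

theorem obgPV_canon (c : ObgPQ) (R : ℚ → ℚ → Prop) (I J : Finset ℚ) {n : ℕ}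
    (x : Fin n → GStarIdx) (E : (Fin n → FreeMonoid Bool × Option ℕ) → Prop) :
    (∀ᶠ t in (obgPV c R I J).toFilter, E (fun k => (obgRd t.2.1 (t.1 (x k)), t.2.2 (x k)))) ↔
    ∀ᶠ g in (obgRowU (obgCls x Sum.inl I)).toFilter,
      ∀ᶠ s in (obgCol c ((obgCls x Sum.inr J).map (fun K => (K, obgLam' R x g K)))).toFilter,
        E (fun k => (obgRd s.1 (g k), s.2 k)) := by
  rw [obgPV_ev]
  have hrow := obgRowU_filter (((I.sort (· ≤ ·)).map
      (fun i => ({Sum.inl i} : Set GStarIdx))).map (fun e => x ⁻¹' e)) (fun g =>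
      ∀ᶠ s in (obgCol c ((obgCls x Sum.inr J).map (fun K => (K, obgLam' R x g K)))).toFilter,
        E (fun k => (obgRd s.1 (g k), s.2 k)))
  rw [← obgRowU_comp x, List.map_map] at hrow
  unfold obgCls at hrow ⊢
  rw [← Function.comp_def (fun e => x ⁻¹' e) (fun i => ({Sum.inl i} : Set GStarIdx)), ← hrow]
  refine Filter.eventually_congr ((obgRowU_inj' I).mono fun f hf => ?_)
  have h1 := obgCol_comp c x ((J.sort (· ≤ ·)).map (fun j => (({Sum.inr j} : Set GStarIdx), obgLam R f j)))
    (fun s => E (fun k => (obgRd s.1 (f (x k)), s.2 k)))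
  rw [List.map_map] at h1
  refine h1.trans ?_
  have h2 := obgCol_filter c (fun j => x ⁻¹' {Sum.inr j}) (obgLam R f) (J.sort (· ≤ ·))
    (fun s => E (fun k => (obgRd s.1 (f (x k)), s.2 k)))
  refine h2.trans ?_
  rw [List.filter_map, List.map_map]
  refine (obgCol_congr c {r | ∃ k, f (x k) = some r} (fun j => x ⁻¹' {Sum.inr j}) (obgLam R f)
    (fun j => obgLam' R x (f ∘ x) (x ⁻¹' {Sum.inr j})) _ ?_
    (fun s => E (fun k => (obgRd s.1 (f (x k)), s.2 k))) ?_).trans Iff.rfl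
  · intro j hj r hr
    obtain ⟨k, hk⟩ := hr
    simp only [List.mem_filter, decide_eq_true_eq] at hj
    obtain ⟨-, k', hk'⟩ := hj
    have hk'' : x k' = Sum.inr j := hk'
    simp only [obgLam, obgLam', decide_eq_decide]
    obtain ⟨i, hi, -⟩ := hf (x k) (x k) rfl (by rw [hk]; simp)
    constructor
    · rintro ⟨i', h1, h2⟩
      obtain ⟨i2, h3, h4⟩ := hf (x k) (Sum.inl i') (by rw [hk, h1]) (by rw [hk]; simp)
      refine ⟨k, k', i', j, hk, hk', ?_, hk'', h2⟩
      rw [h3, h4]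
    · rintro ⟨l, l', i', j', h1, h2, h3, h4, h5⟩
      have h2' : x l' = Sum.inr j := h2
      have : j' = j := Sum.inr_injective (h4.symm.trans h2')
      subst this
      exact ⟨i', by rw [← h3]; exact h1, h5⟩
  · intro u u' m h
    have : ∀ k, obgRd u (f (x k)) = obgRd u' (f (x k)) := by
      intro k
      rcases hk : f (x k) with _ | r
      · rfl
      · exact h r ⟨k, hk⟩
    simp only [this]

theorem obg_mkIdx_cases {n : ℕ} (s : Fin n → Bool) (q : Fin n → ℚ) (k : Fin n) :
    (s k = true ∧ mkIdx s q k = Sum.inl (q k)) ∨ (s k = false ∧ mkIdx s q k = Sum.inr (q k)) := by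
  cases h : s k <;> simp [mkIdx, h]

theorem obg_same_symm (R : ℚ → ℚ → Prop) {n : ℕ} (s : Fin n → Bool) (q q' : Fin n → ℚ)
    (h : SameQfType R (mkIdx s q) (mkIdx s q')) : SameQfType R (mkIdx s q') (mkIdx s q) := by
  intro k l
  have := h k l
  rcases obg_mkIdx_cases s q k with ⟨h1, h2⟩ | ⟨h1, h2⟩ <;>
  rcases obg_mkIdx_cases s q' k with ⟨h3, h4⟩ | ⟨h3, h4⟩ <;>
  rcases obg_mkIdx_cases s q l with ⟨h5, h6⟩ | ⟨h5, h6⟩ <;>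
  rcases obg_mkIdx_cases s q' l with ⟨h7, h8⟩ | ⟨h7, h8⟩ <;>
  simp_all [SamePairType]

theorem obg_tr_inl (R : ℚ → ℚ → Prop) {n : ℕ} (s : Fin n → Bool) (q q' : Fin n → ℚ)
    (h : SameQfType R (mkIdx s q) (mkIdx s q')) : ObgTr Sum.inl (mkIdx s q) (mkIdx s q') := by
  intro k l i i' hi hi'
  have := h k l
  refine ⟨q' k, q' l, ?_⟩
  rcases obg_mkIdx_cases s q k with ⟨h1, h2⟩ | ⟨h1, h2⟩ <;>
  rcases obg_mkIdx_cases s q' k with ⟨h3, h4⟩ | ⟨h3, h4⟩ <;>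
  rcases obg_mkIdx_cases s q l with ⟨h5, h6⟩ | ⟨h5, h6⟩ <;>
  rcases obg_mkIdx_cases s q' l with ⟨h7, h8⟩ | ⟨h7, h8⟩ <;>
  simp_all [SamePairType]
  refine ⟨fun hlt => ?_, fun he => ?_⟩
  · rw [← not_le, ← this.2]; exact not_le.2 hlt
  · exact le_antisymm (this.1.1 he.le) (this.2.1 he.ge)

theorem obg_tr_inr (R : ℚ → ℚ → Prop) {n : ℕ} (s : Fin n → Bool) (q q' : Fin n → ℚ)
    (h : SameQfType R (mkIdx s q) (mkIdx s q')) : ObgTr Sum.inr (mkIdx s q) (mkIdx s q') := by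
  intro k l i i' hi hi'
  have := h k l
  refine ⟨q' k, q' l, ?_⟩
  rcases obg_mkIdx_cases s q k with ⟨h1, h2⟩ | ⟨h1, h2⟩ <;>
  rcases obg_mkIdx_cases s q' k with ⟨h3, h4⟩ | ⟨h3, h4⟩ <;>
  rcases obg_mkIdx_cases s q l with ⟨h5, h6⟩ | ⟨h5, h6⟩ <;>
  rcases obg_mkIdx_cases s q' l with ⟨h7, h8⟩ | ⟨h7, h8⟩ <;>
  simp_all [SamePairType]
  refine ⟨fun hlt => ?_, fun he => ?_⟩
  · rw [← not_le, ← this.2]; exact not_le.2 hlt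
  · exact le_antisymm (this.1.1 he.le) (this.2.1 he.ge)

theorem obgLam_sub (R : ℚ → ℚ → Prop) {n : ℕ} (s : Fin n → Bool) (q q' : Fin n → ℚ)
    (h : SameQfType R (mkIdx s q) (mkIdx s q')) (g : Fin n → Option ℕ) (K : Set (Fin n)) (r : ℕ) :
    (∃ k k' i j, g k = some r ∧ k' ∈ K ∧ mkIdx s q k = Sum.inl i ∧ mkIdx s q k' = Sum.inr j
      ∧ R i j) → 
    (∃ k k' i j, g k = some r ∧ k' ∈ K ∧ mkIdx s q' k = Sum.inl i ∧ mkIdx s q' k' = Sum.inr j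
      ∧ R i j) := by
  rintro ⟨k, l, i, j, h1, h2, h3, h4, h5⟩
  refine ⟨k, l, q' k, q' l, h1, h2, ?_⟩
  have := h k l
  rcases obg_mkIdx_cases s q k with ⟨h1, h2⟩ | ⟨h1, h2⟩ <;>
  rcases obg_mkIdx_cases s q' k with ⟨h3, h4⟩ | ⟨h3, h4⟩ <;>
  rcases obg_mkIdx_cases s q l with ⟨h5, h6⟩ | ⟨h5, h6⟩ <;>
  rcases obg_mkIdx_cases s q' l with ⟨h7, h8⟩ | ⟨h7, h8⟩ <;>
  simp_all [SamePairType]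

theorem obgPV_inv (c : ObgPQ) (R : ℚ → ℚ → Prop) (I J : Finset ℚ) {n : ℕ}
    (s : Fin n → Bool) (q q' : Fin n → ℚ)
    (h : SameQfType R (mkIdx s q) (mkIdx s q'))
    (hI : ∀ k, q k ∈ I ∧ q k ∈ J ∧ q' k ∈ I ∧ q' k ∈ J)
    (E : (Fin n → FreeMonoid Bool × Option ℕ) → Prop) :
    (∀ᶠ t in (obgPV c R I J).toFilter,
      E (fun k => (obgRd t.2.1 (t.1 (mkIdx s q k)), t.2.2 (mkIdx s q k)))) ↔
    (∀ᶠ t in (obgPV c R I J).toFilter,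
      E (fun k => (obgRd t.2.1 (t.1 (mkIdx s q' k)), t.2.2 (mkIdx s q' k)))) := by
  have hs := obg_same_symm R s q q' h
  rw [obgPV_canon, obgPV_canon]
  have key : ∀ (a b : Fin n → ℚ), (∀ k, a k ∈ I ∧ a k ∈ J) → 
      (∀ k i, mkIdx s a k = Sum.inl i → i ∈ I) ∧ (∀ k i, mkIdx s a k = Sum.inr i → i ∈ J) := by
    intro a b ha
    constructor
    · intro k i hi
      rcases obg_mkIdx_cases s a k with ⟨h1, h2⟩ | ⟨h1, h2⟩
      · rw [h2] at hi
        exact Sum.inl_injective hi ▸ (ha k).1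
      · rw [h2] at hi; cases hi
    · intro k i hi
      rcases obg_mkIdx_cases s a k with ⟨h1, h2⟩ | ⟨h1, h2⟩
      · rw [h2] at hi; cases hi
      · rw [h2] at hi
        exact Sum.inr_injective hi ▸ (ha k).2
  have k1 := key q q (fun k => ⟨(hI k).1, (hI k).2.1⟩)
  have k2 := key q' q (fun k => ⟨(hI k).2.2.1, (hI k).2.2.2⟩)
  rw [obgCls_eq (mkIdx s q) (mkIdx s q') Sum.inl Sum.inl_injective I (obg_tr_inl R s q q' h)
    (obg_tr_inl R s q' q hs) k1.1 k2.1, obgCls_eq (mkIdx s q) (mkIdx s q') Sum.inr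
    Sum.inr_injective J (obg_tr_inr R s q q' h) (obg_tr_inr R s q' q hs) k1.2 k2.2]
  have : ∀ g K, obgLam' R (mkIdx s q) g K = obgLam' R (mkIdx s q') g K := by
    intro g K
    funext r
    simp only [obgLam', decide_eq_decide]
    exact ⟨obgLam_sub R s q q' h g K r, obgLam_sub R s q' q hs g K r⟩
  simp only [this]

theorem obgPV_edge (c : ObgPQ) (R : ℚ → ℚ → Prop) (I J : Finset ℚ) (i j : ℚ) (hi : i ∈ I)
    (hj : j ∈ J) :
    ∀ᶠ t in (obgPV c R I J).toFilter, ∃ v, t.2.2 (Sum.inr j) = some v ∧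
      ((FreeMonoid.toList (obgRd t.2.1 (t.1 (Sum.inl i))))[v]? = some true ↔ R i j) := by
  rw [obgPV_ev]
  have h1 := obgRowU_some ((I.sort (· ≤ ·)).map (fun i => ({Sum.inl i} : Set GStarIdx)))
    (Sum.inl i) {Sum.inl i} (List.mem_map.2 ⟨i, by simpa using hi, rfl⟩) rfl
  refine (h1.and (obgRowU_inj' I)).mono ?_
  rintro f ⟨⟨r, hr⟩, hf⟩
  refine (obgCol_mark c (fun j => ({Sum.inr j} : Set GStarIdx)) (obgLam R f) (Sum.inr j) j rfl
    (J.sort (· ≤ ·)) (by simpa using hj) ?_).mono ?_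
  · intro j' _ hj'
    exact (Sum.inr_injective hj').symm
  · rintro t ⟨v, hv1, hv2⟩
    refine ⟨v, hv1, ?_⟩
    simp only [hr, obgRd, obgRow, FreeMonoid.toList_map, List.getElem?_map, hv2, Option.map_some,
      Option.some.injEq, obgLam, decide_eq_true_eq]
    constructor
    · rintro ⟨i', h1, h2⟩
      obtain ⟨i2, h3, h4⟩ := hf (Sum.inl i) (Sum.inl i') (by rw [hr, h1]) (by rw [hr]; simp)
      rwa [Sum.inl_injective (h3.trans h4.symm)]
    · intro h
      exact ⟨i, hr, h⟩

end ObgMain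

section ObgDirOne

open Filter Classical

noncomputable def obgAA {N : Type*} {m : ℕ} (a : ℕ → Fin m → N) (l : FreeMonoid Bool) :
    Fin m → N :=
  a (Encodable.encode (FreeMonoid.toList l))

noncomputable def obgBB {N : Type*} {n : ℕ} (b : Set ℕ → Fin n → N) : Option ℕ → Fin n → N
  | none => b ∅
  | some v => b {e | ∃ l : List Bool, Encodable.encode l = e ∧ l[v]? = some true}

noncomputable def obgF (c : ObgPQ) (R : ℚ → ℚ → Prop) :
    Ultrafilter ((GStarIdx → Option ℕ) × (FreeMonoid ObgA × (GStarIdx → Option ℕ))) :=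
  (Ultrafilter.of (atTop : Filter (Finset ℚ))).bind fun H => obgPV c R H H

theorem obgF_ev (c : ObgPQ) (R : ℚ → ℚ → Prop)
    (E : (GStarIdx → Option ℕ) × (FreeMonoid ObgA × (GStarIdx → Option ℕ)) → Prop) :
    (∀ᶠ t in (obgF c R).toFilter, E t) ↔
      ∀ᶠ H in (Ultrafilter.of (atTop : Filter (Finset ℚ))).toFilter,
        ∀ᶠ t in (obgPV c R H H).toFilter, E t := Iff.rfl

theorem obgF_large (H0 : Finset ℚ) :
    ∀ᶠ H in (Ultrafilter.of (atTop : Filter (Finset ℚ))).toFilter, H0 ⊆ H :=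
  Ultrafilter.of_le atTop (eventually_ge_atTop H0)

theorem obg_pick_eq {N : Type*} {da db n : ℕ} (aa : FreeMonoid Bool → Fin da → N)
    (bb : Option ℕ → Fin db → N) (s : Fin n → Bool) (q : Fin n → ℚ)
    (t : (GStarIdx → Option ℕ) × (FreeMonoid ObgA × (GStarIdx → Option ℕ)))
    (k : Fin n) : 
    ∀ (w : MixVar da db (s k)),
    pickSide (aa (obgRd t.2.1 (t.1 (Sum.inl (q k))))) (bb (t.2.2 (Sum.inr (q k)))) (s k) w =
    pickSide (aa (obgRd t.2.1 (t.1 (mkIdx s q k)))) (bb (t.2.2 (mkIdx s q k))) (s k) w := by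
  unfold mkIdx
  generalize s k = b
  intro w
  cases b
  · rfl
  · rfl

theorem obg_pick_cast {Ω N Q : Type*} (cast : (Ω → N) → Q) {da db : ℕ} (A : Fin da → Ω → N)
    (B : Fin db → Ω → N) (b : Bool) (w : MixVar da db b) :
    pickSide (fun v => cast (A v)) (fun v => cast (B v)) b w =
      cast (fun t => pickSide (fun v => A v t) (fun v => B v t) b w) := by
  cases b
  · rfl
  · rfl

theorem obg_ultrapower {L : FirstOrder.Language.{u, v}} (T : L.Theory) (N : Type (max u v))
    [L.Structure N] [Nonempty N] (hN : N ⊨ T) {Ω : Type} (F : Ultrafilter Ω) :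
    ∃ (Q : FirstOrder.Language.Theory.ModelType.{u, v, max u v} T) (cast : (Ω → N) → Q),
      ∀ (β : Type) (ψ : L.Formula β) (x : β → Ω → N),
        ψ.Realize (fun v => cast (x v)) ↔ ∀ᶠ t in F.toFilter, ψ.Realize (fun v => x v t) := by
  have hQ : F.toFilter.Product (fun _ => N) ⊨ T := by
    refine ⟨fun ψ hψ => ?_⟩
    rw [Ultraproduct.sentence_realize]
    exact Filter.Eventually.of_forall fun _ => Theory.realize_sentence_of_mem T hψ
  refine ⟨Theory.ModelType.of T (F.toFilter.Product (fun _ => N)),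
    fun f => (f : F.toFilter.Product (fun _ => N)), fun β ψ x => ?_⟩
  exact Ultraproduct.realize_formula_cast (u := F) (M := fun _ => N) ψ x

theorem obg_dir_one {L : FirstOrder.Language.{u, v}} (T : L.Theory) (m n : ℕ)
    (φ : L.Formula (Fin m ⊕ Fin n)) (h : FormulaHasIP T φ) (R : ℚ → ℚ → Prop) :
    ∃ (N : FirstOrder.Language.Theory.ModelType.{u, v, max u v} T)
      (a : ℚ → Fin m → N) (b : ℚ → Fin n → N),
      IsLStarIndiscernible (L := L) R a b ∧
      ∀ i j, φ.Realize (Sum.elim (a i) (b j)) ↔ R i j := by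
  obtain ⟨N, a, b, hab⟩ := h
  obtain ⟨p, q, h1, h2, h3, h4⟩ := obg_exists_pq ObgA
  let c : ObgPQ := ⟨p, q, h1, h2, h3, h4⟩
  let F := obgF c R
  have hbase : ∀ l v, φ.Realize (Sum.elim (obgAA a l) (obgBB b (some v))) ↔
      (FreeMonoid.toList l)[v]? = some true := by
    intro l v
    refine (hab _ _).trans ?_
    constructor
    · rintro ⟨l', h, h'⟩
      rwa [← Encodable.encode_injective h]
    · intro h
      exact ⟨_, rfl, h⟩
  obtain ⟨Q, cast, hcast⟩ := obg_ultrapower T (N : Type (max u v)) N.is_model F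
  let A : ℚ → Fin m → Q := fun i z =>
    cast (fun t => obgAA a (obgRd t.2.1 (t.1 (Sum.inl i))) z)
  let B : ℚ → Fin n → Q := fun j z =>
    cast (fun t => obgBB b (t.2.2 (Sum.inr j)) z)
  refine ⟨Q, A, B, ?_, ?_⟩
  · intro k s q q' hs ψ
    have key : ∀ q : Fin k → ℚ, 
        ψ.Realize (fun v => pickSide (A (q v.1)) (B (q v.1)) (s v.1) v.2) ↔
        ∀ᶠ t in F.toFilter, (fun Z : Fin k → FreeMonoid Bool × Option ℕ =>
          ψ.Realize (fun v => pickSide (obgAA a (Z v.1).1) (obgBB b (Z v.1).2) (s v.1) v.2))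
          (fun k => (obgRd t.2.1 (t.1 (mkIdx s q k)), t.2.2 (mkIdx s q k))) := by
      intro q
      have e := hcast _ ψ
        (fun v t => pickSide (obgAA a (obgRd t.2.1 (t.1 (Sum.inl (q v.1)))))
          (obgBB b (t.2.2 (Sum.inr (q v.1)))) (s v.1) v.2)
      have e2 : (fun v : (k_1 : Fin k) × MixVar m n (s k_1) =>
            pickSide (A (q v.1)) (B (q v.1)) (s v.1) v.2) = fun v =>
          cast (fun t => pickSide (obgAA a (obgRd t.2.1 (t.1 (Sum.inl (q v.1)))))
          (obgBB b (t.2.2 (Sum.inr (q v.1)))) (s v.1) v.2) := by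
        funext v
        exact obg_pick_cast cast
          (fun z t => obgAA a (obgRd t.2.1 (t.1 (Sum.inl (q v.1)))) z)
          (fun z t => obgBB b (t.2.2 (Sum.inr (q v.1))) z) (s v.1) v.2
      rw [e2]
      refine e.trans ?_
      refine Filter.eventually_congr (Filter.Eventually.of_forall fun t => ?_)
      simp only [obg_pick_eq]
    refine (key q).trans (Iff.trans ?_ (key q').symm)
    rw [obgF_ev, obgF_ev]
    refine Filter.eventually_congr ((obgF_large
      (Finset.univ.image q ∪ Finset.univ.image q')).mono fun H hH => ?_)
    refine obgPV_inv c R H H s q q' hs (fun k => ?_)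
      (fun Z : Fin k → FreeMonoid Bool × Option ℕ =>
          ψ.Realize (fun v => pickSide (obgAA a (Z v.1).1) (obgBB b (Z v.1).2) (s v.1) v.2))
    have e1 : q k ∈ H := hH (Finset.mem_union_left _ (Finset.mem_image_of_mem q (Finset.mem_univ k)))
    have e2 : q' k ∈ H :=
      hH (Finset.mem_union_right _ (Finset.mem_image_of_mem q' (Finset.mem_univ k)))
    exact ⟨e1, e1, e2, e2⟩
  · intro i j
    have e := hcast _ φ
        (fun v t => Sum.elim (obgAA a (obgRd t.2.1 (t.1 (Sum.inl i))))
          (obgBB b (t.2.2 (Sum.inr j))) v)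
    have e2 : Sum.elim (A i) (B j) = fun v =>
          cast (fun t => Sum.elim (obgAA a (obgRd t.2.1 (t.1 (Sum.inl i))))
          (obgBB b (t.2.2 (Sum.inr j))) v) := by
      funext v
      cases v <;> rfl
    rw [e2]
    refine e.trans ?_
    have hev : ∀ᶠ t in F.toFilter, (φ.Realize (fun v => Sum.elim 
        (obgAA a (obgRd t.2.1 (t.1 (Sum.inl i)))) (obgBB b (t.2.2 (Sum.inr j))) v) ↔ R i j) := by
      rw [obgF_ev]
      refine (obgF_large {i, j}).mono fun H hH => ?_
      refine (obgPV_edge c R H H i j (hH (by simp)) (hH (by simp))).mono ?_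
      rintro t ⟨v, hv1, hv2⟩
      rw [hv1]
      exact (hbase _ _).trans hv2
    rw [Filter.eventually_congr hev]
    simp

end ObgDirOne

section ObgGeneric

open Classical

theorem obg_exists_random : ∃ R : ℚ → ℚ → Prop, IsRandomOBG R := by
  let X := ℚ × ℚ → Bool
  -- requirements
  let O1 : Finset ℚ × Finset ℚ × ℚ × ℚ → Set X := fun d =>
    {R | (Disjoint d.1 d.2.1 ∧ d.2.2.1 < d.2.2.2) → ∃ x, d.2.2.1 < x ∧ x < d.2.2.2 ∧
      ∀ y ∈ d.1 ∪ d.2.1, R (x, y) = decide (y ∈ d.1)}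
  let O2 : Finset ℚ × Finset ℚ × ℚ × ℚ → Set X := fun d =>
    {R | (Disjoint d.1 d.2.1 ∧ d.2.2.1 < d.2.2.2) → ∃ x, d.2.2.1 < x ∧ x < d.2.2.2 ∧
      ∀ y ∈ d.1 ∪ d.2.1, R (y, x) = decide (y ∈ d.1)}
  have gen : ∀ (pr : ℚ → ℚ → ℚ × ℚ) (_ : ∀ x y x' y', pr x y = pr x' y' → x = x' ∧ y = y')
      (d : Finset ℚ × Finset ℚ × ℚ × ℚ),
      IsOpen {R : X | (Disjoint d.1 d.2.1 ∧ d.2.2.1 < d.2.2.2) →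
        ∃ x, d.2.2.1 < x ∧ x < d.2.2.2 ∧ ∀ y ∈ d.1 ∪ d.2.1, R (pr x y) = decide (y ∈ d.1)} ∧
      Dense {R : X | (Disjoint d.1 d.2.1 ∧ d.2.2.1 < d.2.2.2) →
        ∃ x, d.2.2.1 < x ∧ x < d.2.2.2 ∧ ∀ y ∈ d.1 ∪ d.2.1, R (pr x y) = decide (y ∈ d.1)} := by
    rintro pr hpr ⟨F, G, lo, hi⟩
    by_cases hd : Disjoint F G ∧ lo < hi
    swap
    · simp [hd]
    simp only [hd, and_self, forall_const]
    constructor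
    · have : {R : X | ∃ x, lo < x ∧ x < hi ∧ ∀ y ∈ F ∪ G, R (pr x y) = decide (y ∈ F)} =
          ⋃ x ∈ Set.Ioo lo hi, ⋂ y ∈ F ∪ G, {R : X | R (pr x y) = decide (y ∈ F)} := by
        ext R
        simp [and_assoc]
      rw [this]
      refine isOpen_biUnion fun x _ => isOpen_biInter_finset fun y _ => ?_
      have hc : Continuous (fun R : X => R (pr x y)) := continuous_apply _
      exact (isOpen_discrete ({decide (y ∈ F)} : Set Bool)).preimage hc
    · rw [dense_iff_inter_open]
      rintro U hU ⟨S, hS⟩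
      obtain ⟨D, u, hu, hsub⟩ := isOpen_pi_iff.1 hU S hS
      have hinf : (Set.Ioo lo hi).Infinite := Set.Ioo_infinite hd.2
      have hfin : {x | ∃ y ∈ F ∪ G, pr x y ∈ D}.Finite := by
        have : {x | ∃ y ∈ F ∪ G, pr x y ∈ D} = ⋃ y ∈ F ∪ G, (fun x => pr x y) ⁻¹' (D : Set (ℚ × ℚ)) := by
          ext x; simp
        rw [this]
        refine Set.Finite.biUnion (Finset.finite_toSet _) fun y _ => ?_
        exact Set.Finite.preimage (fun x _ x' _ h => (hpr _ _ _ _ h).1) D.finite_toSet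
      obtain ⟨x, hx, hxn⟩ := (hinf.sdiff hfin).nonempty
      let S' : X := fun e => if ∃ y ∈ F ∪ G, e = pr x y ∧ y ∈ F then true else
        if ∃ y ∈ F ∪ G, e = pr x y then false else S e
      refine ⟨S', hsub ?_, x, hx.1, hx.2, ?_⟩
      · intro e he
        have hne : ∀ y ∈ F ∪ G, e ≠ pr x y := by
          rintro y hy rfl
          exact hxn ⟨y, hy, he⟩
        have : S' e = S e := by
          simp only [S']
          rw [if_neg, if_neg]
          · rintro ⟨y, hy, h⟩; exact hne y hy h
          · rintro ⟨y, hy, h, _⟩; exact hne y hy h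
        rw [this]
        exact (hu e he).2
      · intro y hy
        by_cases hyF : y ∈ F
        · simp only [S']
          rw [if_pos ⟨y, hy, rfl, hyF⟩]
          simp [hyF]
        · simp only [S']
          rw [if_neg, if_pos ⟨y, hy, rfl⟩]
          · simp [hyF]
          · rintro ⟨y', hy', h, h'⟩
            rw [(hpr _ _ _ _ h).2] at hyF
            exact hyF h'
  have d1 : Dense (⋂ d, O1 d ∩ O2 d) := by
    have g1 := gen (fun x y => (x, y)) (fun x y x' y' h => by simpa using h)
    have g2 := gen (fun x y => (y, x)) (fun x y x' y' h => by simpa [and_comm] using h)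
    exact dense_iInter_of_isOpen (fun d => (g1 d).1.inter (g2 d).1)
      (fun d => (g1 d).2.inter_of_isOpen_left (g2 d).2 (g1 d).1)
  obtain ⟨S, hS⟩ := d1.nonempty
  rw [Set.mem_iInter] at hS
  refine ⟨fun x y => S (x, y) = true, inferInstance, inferInstance, inferInstance, inferInstance,
    ?_, ?_⟩
  · intro F G hFG
    have key : ∀ lo hi, lo < hi → ∃ z ∈ {x : ℚ | (∀ f ∈ F, S (x, f) = true) ∧ 
        ∀ g ∈ G, ¬ S (x, g) = true}, lo < z ∧ z < hi := by
      intro lo hi hlt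
      obtain ⟨x, h1, h2, h3⟩ := (hS (F, G, lo, hi)).1 ⟨hFG, hlt⟩
      refine ⟨x, ⟨fun f hf => ?_, fun g hg => ?_⟩, h1, h2⟩
      · rw [h3 f (Finset.mem_union_left _ hf)]; simpa using hf
      · rw [h3 g (Finset.mem_union_right _ hg)]
        simpa using Finset.disjoint_right.1 hFG hg
    refine ⟨key, fun x => ?_, fun x => ?_⟩
    · obtain ⟨z, hz, _, h⟩ := key (x - 1) x (by linarith)
      exact ⟨z, hz, h⟩
    · obtain ⟨z, hz, h, _⟩ := key x (x + 1) (by linarith)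
      exact ⟨z, hz, h⟩
  · intro F G hFG
    have key : ∀ lo hi, lo < hi → ∃ z ∈ {x : ℚ | (∀ f ∈ F, S (f, x) = true) ∧ 
        ∀ g ∈ G, ¬ S (g, x) = true}, lo < z ∧ z < hi := by
      intro lo hi hlt
      obtain ⟨x, h1, h2, h3⟩ := (hS (F, G, lo, hi)).2 ⟨hFG, hlt⟩
      refine ⟨x, ⟨fun f hf => ?_, fun g hg => ?_⟩, h1, h2⟩
      · rw [h3 f (Finset.mem_union_left _ hf)]; simpa using hf
      · rw [h3 g (Finset.mem_union_right _ hg)]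
        simpa using Finset.disjoint_right.1 hFG hg
    refine ⟨key, fun x => ?_, fun x => ?_⟩
    · obtain ⟨z, hz, _, h⟩ := key (x - 1) x (by linarith)
      exact ⟨z, hz, h⟩
    · obtain ⟨z, hz, h, _⟩ := key x (x + 1) (by linarith)
      exact ⟨z, hz, h⟩

end ObgGeneric

section ObgDirTwo

open Filter Classical

/-- Evaluation of a formula at a pair of index tuples. -/
def obgRz {L : FirstOrder.Language.{u, v}} {M : Type (max u v)} [L.Structure M]
    {da db n m : ℕ} (a : ℚ → Fin da → M) (b : ℚ → Fin db → M)
    (ψ : L.Formula ((Fin n × Fin da) ⊕ (Fin m × Fin db))) (x : Fin n → ℚ) (y : Fin m → ℚ) : Prop :=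
  ψ.Realize (Sum.elim (fun v => a (x v.1) v.2) (fun v => b (y v.1) v.2))

theorem obg_interval_left {R : ℚ → ℚ → Prop} (hR : IsRandomOBG R) (D : Finset ℚ) (P : ℚ → Prop)
    (lo hi : ℚ) (h : lo < hi) : ∃ z, lo < z ∧ z < hi ∧ ∀ d ∈ D, (R z d ↔ P d) := by
  obtain ⟨z, ⟨hz1, hz2⟩, h1, h2⟩ := (hR.2.2.2.2.1 (D.filter P) (D.filter fun d => ¬ P d)
    (Finset.disjoint_filter_filter_not _ _ _)).1 lo hi h
  refine ⟨z, h1, h2, fun d hd => ⟨fun hr => ?_, fun hp => hz1 d (by simp [hd, hp])⟩⟩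
  by_contra hp
  exact hz2 d (by simp [hd, hp]) hr

theorem obg_interval_right {R : ℚ → ℚ → Prop} (hR : IsRandomOBG R) (D : Finset ℚ) (P : ℚ → Prop)
    (lo hi : ℚ) (h : lo < hi) : ∃ z, lo < z ∧ z < hi ∧ ∀ d ∈ D, (R d z ↔ P d) := by
  obtain ⟨z, ⟨hz1, hz2⟩, h1, h2⟩ := (hR.2.2.2.2.2 (D.filter P) (D.filter fun d => ¬ P d)
    (Finset.disjoint_filter_filter_not _ _ _)).1 lo hi h
  refine ⟨z, h1, h2, fun d hd => ⟨fun hr => ?_, fun hp => hz1 d (by simp [hd, hp])⟩⟩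
  by_contra hp
  exact hz2 d (by simp [hd, hp]) hr

theorem obg_mono_of_interval {n : ℕ} (x : Fin n → ℚ)
    (h : ∀ k : Fin n, (k.val : ℚ) ≤ x k ∧ x k < (k.val : ℚ) + 1) : StrictMono x := by
  intro k l hkl
  have : (k.val : ℚ) + 1 ≤ l.val := by exact_mod_cast Nat.succ_le_of_lt hkl
  linarith [(h k).2, (h l).1]

theorem obg_exists_pattern {R : ℚ → ℚ → Prop} (hR : IsRandomOBG R) {n m : ℕ}
    (E : Fin n → Fin m → Prop) :
    ∃ (x : Fin n → ℚ) (y : Fin m → ℚ), StrictMono x ∧ StrictMono y ∧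
      ∀ k l, R (x k) (y l) ↔ E k l := by
  have h : ∀ k : Fin n, ∃ z, (k.val : ℚ) < z ∧ z < (k.val : ℚ) + 1 ∧
      ∀ d ∈ Finset.univ.image (fun l : Fin m => (l.val : ℚ)),
        (R z d ↔ ∃ l : Fin m, (l.val : ℚ) = d ∧ E k l) :=
    fun k => obg_interval_left hR _ _ _ _ (by linarith)
  choose x h1 h2 h3 using h
  refine ⟨x, fun l => (l.val : ℚ), obg_mono_of_interval x fun k => ⟨(h1 k).le, h2 k⟩,
    obg_mono_of_interval _ fun k => ⟨le_rfl, by linarith⟩, fun k l => ?_⟩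
  refine (h3 k _ (Finset.mem_image_of_mem _ (Finset.mem_univ l))).trans ?_
  constructor
  · rintro ⟨l', h, h'⟩
    have : l' = l := Fin.ext (by exact_mod_cast h)
    rwa [← this]
  · intro h
    exact ⟨l, rfl, h⟩

theorem obg_pick_transport {M : Type*} {da db : ℕ} (A : Fin da → M) (B : Fin db → M)
    {b b' : Bool} (h : b = b') (w : MixVar da db b) :
    pickSide A B b' (h ▸ w) = pickSide A B b w := by
  subst h
  rfl

theorem obg_pattern {L : FirstOrder.Language.{u, v}} {M : Type (max u v)} [L.Structure M]
    {R : ℚ → ℚ → Prop} {da db n m : ℕ} {a : ℚ → Fin da → M} {b : ℚ → Fin db → M}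
    (hL : IsLStarIndiscernible (L := L) R a b)
    (ψ : L.Formula ((Fin n × Fin da) ⊕ (Fin m × Fin db))) {x x' : Fin n → ℚ} {y y' : Fin m → ℚ}
    (hx : StrictMono x) (hx' : StrictMono x') (hy : StrictMono y) (hy' : StrictMono y')
    (h : ∀ k l, R (x k) (y l) ↔ R (x' k) (y' l)) :
    obgRz a b ψ x y ↔ obgRz a b ψ x' y' := by
  let s : Fin (n + m) → Bool := Fin.append (fun _ => true) (fun _ => false)
  have hs1 : ∀ k, true = s (Fin.castAdd m k) := fun k => by simp [s]
  have hs2 : ∀ k, false = s (Fin.natAdd n k) := fun k => by simp [s]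
  let f : (Fin n × Fin da) ⊕ (Fin m × Fin db) → (k : Fin (n + m)) × MixVar da db (s k) :=
    Sum.elim (fun w => ⟨Fin.castAdd m w.1, hs1 w.1 ▸ (show MixVar da db true from w.2)⟩)
      (fun w => ⟨Fin.natAdd n w.1, hs2 w.1 ▸ (show MixVar da db false from w.2)⟩)
  have key : ∀ (x : Fin n → ℚ) (y : Fin m → ℚ), obgRz a b ψ x y ↔
      (ψ.relabel f).Realize (fun v => pickSide (a (Fin.append x y v.1)) (b (Fin.append x y v.1))
        (s v.1) v.2) := by
    intro x y
    rw [Formula.realize_relabel]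
    unfold obgRz
    have : (Sum.elim (fun v => a (x v.1) v.2) (fun v => b (y v.1) v.2)) =
      (fun v : (k : Fin (n + m)) × MixVar da db (s k) => pickSide (a (Fin.append x y v.1))
        (b (Fin.append x y v.1)) (s v.1) v.2) ∘ f := by
      funext w
      rcases w with w | w
      · refine Eq.trans ?_ (obg_pick_transport _ _ (hs1 w.1) (show MixVar da db true from w.2)).symm
        show a (x w.1) w.2 = a (Fin.append x y (Fin.castAdd m w.1)) w.2
        rw [Fin.append_left]
      · refine Eq.trans ?_ (obg_pick_transport _ _ (hs2 w.1) (show MixVar da db false from w.2)).symm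
        show b (y w.1) w.2 = b (Fin.append x y (Fin.natAdd n w.1)) w.2
        rw [Fin.append_right]
    rw [this]
  rw [key, key]
  refine hL _ s _ _ ?_ _
  have m1 : ∀ (x : Fin n → ℚ) (y : Fin m → ℚ) k,
      mkIdx s (Fin.append x y) (Fin.castAdd m k) = Sum.inl (x k) := by
    intro x y k
    simp [mkIdx, s]
  have m2 : ∀ (x : Fin n → ℚ) (y : Fin m → ℚ) k,
      mkIdx s (Fin.append x y) (Fin.natAdd n k) = Sum.inr (y k) := by
    intro x y k
    simp [mkIdx, s]
  intro k l
  induction k using Fin.addCases with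
  | left k =>
    induction l using Fin.addCases with
    | left l =>
      rw [m1, m1, m1, m1]
      exact ⟨hx.le_iff_le.trans hx'.le_iff_le.symm, hx.le_iff_le.trans hx'.le_iff_le.symm⟩
    | right l =>
      rw [m1, m1, m2, m2]
      exact h k l
  | right k =>
    induction l using Fin.addCases with
    | left l =>
      rw [m1, m1, m2, m2]
      exact h l k
    | right l =>
      rw [m2, m2, m2, m2]
      exact ⟨hy.le_iff_le.trans hy'.le_iff_le.symm, hy.le_iff_le.trans hy'.le_iff_le.symm⟩

theorem obg_core {L : FirstOrder.Language.{u, v}} {T : L.Theory}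
    (hnip : ∀ (m n : ℕ) (φ : L.Formula (Fin m ⊕ Fin n)), ¬ FormulaHasIP T φ)
    {M : Type (max u v)} [L.Structure M] [Nonempty M] (hM : M ⊨ T)
    {R : ℚ → ℚ → Prop} (hR : IsRandomOBG R)
    {da db n m : ℕ} {a : ℚ → Fin da → M} {b : ℚ → Fin db → M}
    (hL : IsLStarIndiscernible (L := L) R a b)
    (ψ : L.Formula ((Fin n × Fin da) ⊕ (Fin m × Fin db))) {x x' : Fin n → ℚ} {y y' : Fin m → ℚ}
    (hx : StrictMono x) (hx' : StrictMono x') (hy : StrictMono y) (hy' : StrictMono y')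
    (k0 : Fin n) (l0 : Fin m)
    (h : ∀ k l, (k, l) ≠ (k0, l0) → (R (x k) (y l) ↔ R (x' k) (y' l)))
    (h0 : R (x k0) (y l0)) (h0' : ¬ R (x' k0) (y' l0))
    (hψ : obgRz a b ψ x y) (hψ' : ¬ obgRz a b ψ x' y') : False := by
  -- the frame
  have hX : ∀ k : Fin n, ∃ z, (k.val : ℚ) < z ∧ z < (k.val : ℚ) + 1 ∧
      ∀ d ∈ Finset.univ.image (fun l : Fin m => (l.val : ℚ)),
        (R z d ↔ ∃ l : Fin m, (l.val : ℚ) = d ∧ R (x k) (y l)) :=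
    fun k => obg_interval_left hR _ _ _ _ (by linarith)
  choose X X1 X2 X3 using hX
  have hU : ∀ i : ℕ, ∃ z, (k0.val : ℚ) + 1 - 1 / (i + 1) < z ∧
      z < (k0.val : ℚ) + 1 - 1 / (i + 1 + 1) ∧
      ∀ d ∈ Finset.univ.image (fun l : Fin m => (l.val : ℚ)),
        (R z d ↔ ∃ l : Fin m, (l.val : ℚ) = d ∧ R (x k0) (y l)) := by
    intro i
    refine obg_interval_left hR _ _ _ _ ?_
    have : (1 : ℚ) / (i + 1 + 1) < 1 / (i + 1) := by
      apply one_div_lt_one_div_of_lt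
      · positivity
      · linarith
    linarith
  choose U U1 U2 U3 using hU
  have hUmono : StrictMono U := by
    refine strictMono_nat_of_lt_succ fun i => ?_
    have := U1 (i + 1)
    push_cast at this
    linarith [U2 i]
  have hUb : ∀ i, (k0.val : ℚ) < U i ∧ U i < (k0.val : ℚ) + 1 := by
    intro i
    have e1 : (1 : ℚ) / (i + 1) ≤ 1 := by
      rw [div_le_one (by positivity)]
      linarith [(Nat.cast_nonneg i : (0 : ℚ) ≤ i)]
    have e2 : (0 : ℚ) < 1 / (i + 1 + 1) := by positivity
    exact ⟨by linarith [U1 i], by linarith [U2 i]⟩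
  have hev : ∀ (C : Fin m → Prop) (l : Fin m),
      (∃ l' : Fin m, (l'.val : ℚ) = (l.val : ℚ) ∧ C l') ↔ C l := by
    intro C l
    constructor
    · rintro ⟨l', h, h'⟩
      have : l' = l := Fin.ext (by exact_mod_cast h)
      rwa [← this]
    · intro h
      exact ⟨l, rfl, h⟩
  have X3' : ∀ k (l : Fin m), R (X k) (l.val : ℚ) ↔ R (x k) (y l) := fun k l =>
    (X3 k _ (Finset.mem_image_of_mem _ (Finset.mem_univ l))).trans (hev _ l)
  have U3' : ∀ i (l : Fin m), R (U i) (l.val : ℚ) ↔ R (x k0) (y l) := fun i l =>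
    (U3 i _ (Finset.mem_image_of_mem _ (Finset.mem_univ l))).trans (hev _ l)
  have hXU : ∀ k, k ≠ k0 → ∀ i, X k ≠ U i := by
    intro k hk i he
    have a1 := X1 k
    have a2 := X2 k
    have a3 := hUb i
    rw [he] at a1 a2
    apply hk
    have b1 : (k.val : ℚ) < (k0.val + 1 : ℕ) := by push_cast; linarith
    have b2 : (k0.val : ℚ) < (k.val + 1 : ℕ) := by push_cast; linarith
    rw [Nat.cast_lt] at b1 b2
    exact Fin.ext (by omega)
  have hXmono : StrictMono X := obg_mono_of_interval X fun k => ⟨(X1 k).le, X2 k⟩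
  have hV : ∀ (S : Set ℕ) (N : ℕ), ∃ z, (l0.val : ℚ) < z ∧ z < (l0.val : ℚ) + 1 ∧
      ∀ d ∈ (Finset.univ.filter (fun k => k ≠ k0)).image X ∪ (Finset.range N).image U,
        (R d z ↔ (∃ k, k ≠ k0 ∧ X k = d ∧ R (x k) (y l0)) ∨ ∃ i ∈ S, U i = d) :=
    fun S N => obg_interval_right hR _ _ _ _ (by linarith)
  choose V V1 V2 V3 using hV
  have VX : ∀ S N k, k ≠ k0 → (R (X k) (V S N) ↔ R (x k) (y l0)) := by
    intro S N k hk
    rw [V3 S N (X k) (Finset.mem_union_left _ (Finset.mem_image_of_mem _ (by simp [hk])))]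
    constructor
    · rintro (⟨k', _, he, h⟩ | ⟨i, _, he⟩)
      · rwa [← hXmono.injective he]
      · exact absurd he.symm (hXU k hk i)
    · intro h
      exact Or.inl ⟨k, hk, rfl, h⟩
  have VU : ∀ S N i, i < N → (R (U i) (V S N) ↔ i ∈ S) := by
    intro S N i hi
    rw [V3 S N (U i) (Finset.mem_union_right _ (Finset.mem_image_of_mem _ (by simp [hi])))]
    constructor
    · rintro (⟨k', hk', he, h⟩ | ⟨i', hi', he⟩)
      · exact absurd he (hXU k' hk' i)
      · rwa [← hUmono.injective he]
    · intro h
      exact Or.inr ⟨i, h, rfl⟩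
  let XX : ℕ → Fin n → ℚ := fun i k => if k = k0 then U i else X k
  let YY : Set ℕ → ℕ → Fin m → ℚ := fun S N l => if l = l0 then V S N else (l.val : ℚ)
  have XXm : ∀ i, StrictMono (XX i) := by
    intro i
    refine obg_mono_of_interval _ fun k => ?_
    by_cases hk : k = k0
    · subst hk
      simp only [XX, if_true]
      exact ⟨(hUb i).1.le, (hUb i).2⟩
    · simp only [XX, if_neg hk]
      exact ⟨(X1 k).le, X2 k⟩
  have YYm : ∀ S N, StrictMono (YY S N) := by
    intro S N
    refine obg_mono_of_interval _ fun k => ?_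
    by_cases hk : k = l0
    · subst hk
      simp only [YY, if_true]
      exact ⟨(V1 S N).le, V2 S N⟩
    · simp only [YY, if_neg hk]
      exact ⟨le_rfl, by linarith⟩
  have off : ∀ i S N k l, (k, l) ≠ (k0, l0) → (R (XX i k) (YY S N l) ↔ R (x k) (y l)) := by
    intro i S N k l hkl
    by_cases hk : k = k0
    · have hl : l ≠ l0 := fun hl => hkl (by rw [hk, hl])
      simp only [XX, YY, if_pos hk, if_neg hl]
      rw [hk]
      exact U3' i l
    · by_cases hl : l = l0
      · simp only [XX, YY, if_neg hk, if_pos hl]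
        rw [hl]
        exact VX S N k hk
      · simp only [XX, YY, if_neg hk, if_neg hl]
        exact X3' k l
  have real : ∀ i S N, i < N → (obgRz a b ψ (XX i) (YY S N) ↔ i ∈ S) := by
    intro i S N hi
    have on : R (XX i k0) (YY S N l0) ↔ i ∈ S := by
      simp only [XX, YY, if_true]
      exact VU S N i hi
    by_cases hS : i ∈ S
    · refine iff_of_true ?_ hS
      refine (obg_pattern hL ψ (XXm i) hx (YYm S N) hy fun k l => ?_).2 hψ
      by_cases hkl : (k, l) = (k0, l0)
      · obtain ⟨rfl, rfl⟩ := Prod.mk.inj hkl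
        exact iff_of_true (on.2 hS) h0
      · exact off i S N k l hkl
    · refine iff_of_false ?_ hS
      refine fun hh => hψ' ((obg_pattern hL ψ (XXm i) hx' (YYm S N) hy' fun k l => ?_).1 hh)
      by_cases hkl : (k, l) = (k0, l0)
      · obtain ⟨rfl, rfl⟩ := Prod.mk.inj hkl
        exact iff_of_false (fun h => hS (on.1 h)) h0'
      · exact (off i S N k l hkl).trans (h k l hkl)
  -- the independence property in an ultrapower
  obtain ⟨Q, cast, hcast⟩ := obg_ultrapower T M hM (Ultrafilter.of (atTop : Filter ℕ))
  let e := Fintype.equivFin ((Fin n × Fin da) ⊕ (Fin m × Fin db))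
  let g : (Fin n × Fin da) ⊕ (Fin m × Fin db) →
      Fin da ⊕ Fin (Fintype.card ((Fin n × Fin da) ⊕ (Fin m × Fin db))) :=
    Sum.elim (fun w => if w.1 = k0 then Sum.inl w.2 else Sum.inr (e (Sum.inl w)))
      (fun w => Sum.inr (e (Sum.inr w)))
  let rest : Set ℕ → ℕ → (Fin n × Fin da) ⊕ (Fin m × Fin db) → M := fun S N =>
    Sum.elim (fun v => a (X v.1) v.2) (fun v => b (YY S N v.1) v.2)
  refine hnip _ _ (ψ.relabel g) ⟨Q, fun i z => cast (fun _ => a (U i) z),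
    fun S w => cast (fun N => rest S N (e.symm w)), fun i S => ?_⟩
  rw [Formula.realize_relabel]
  have e1 : (Sum.elim (fun z => cast (fun _ => a (U i) z))
      (fun w => cast (fun N => rest S N (e.symm w)))) ∘ g = fun v => cast ((fun v N =>
        (Sum.elim (fun v => a (XX i v.1) v.2) (fun v => b (YY S N v.1) v.2) :
          (Fin n × Fin da) ⊕ (Fin m × Fin db) → M) v) v) := by
    funext v
    rcases v with v | v
    · by_cases hv : v.1 = k0
      · simp [g, XX, hv]
      · simp [g, XX, hv, rest]
    · simp [g, rest]
  rw [e1, hcast]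
  have hlarge : ∀ᶠ N in (Ultrafilter.of (atTop : Filter ℕ)).toFilter, i < N :=
    Ultrafilter.of_le atTop (eventually_gt_atTop i)
  refine (Filter.eventually_congr (hlarge.mono fun N hN => real i S N hN)).trans ?_
  simp

theorem obg_step {L : FirstOrder.Language.{u, v}} {T : L.Theory}
    (hnip : ∀ (m n : ℕ) (φ : L.Formula (Fin m ⊕ Fin n)), ¬ FormulaHasIP T φ)
    {M : Type (max u v)} [L.Structure M] [Nonempty M] (hM : M ⊨ T)
    {R : ℚ → ℚ → Prop} (hR : IsRandomOBG R)
    {da db n m : ℕ} {a : ℚ → Fin da → M} {b : ℚ → Fin db → M}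
    (hL : IsLStarIndiscernible (L := L) R a b)
    (ψ : L.Formula ((Fin n × Fin da) ⊕ (Fin m × Fin db))) {x x' : Fin n → ℚ} {y y' : Fin m → ℚ}
    (hx : StrictMono x) (hx' : StrictMono x') (hy : StrictMono y) (hy' : StrictMono y')
    (k0 : Fin n) (l0 : Fin m)
    (h : ∀ k l, (k, l) ≠ (k0, l0) → (R (x k) (y l) ↔ R (x' k) (y' l)))
    (h0 : R (x k0) (y l0)) (h0' : ¬ R (x' k0) (y' l0)) :
    obgRz a b ψ x y ↔ obgRz a b ψ x' y' := by
  have hnot : ∀ (x : Fin n → ℚ) (y : Fin m → ℚ), obgRz a b ψ.not x y ↔ ¬ obgRz a b ψ x y := by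
    intro x y
    exact Formula.realize_not
  constructor
  · intro hh
    by_contra hc
    exact obg_core hnip hM hR hL ψ hx hx' hy hy' k0 l0 h h0 h0' hh hc
  · intro hh
    by_contra hc
    exact obg_core hnip hM hR hL ψ.not hx hx' hy hy' k0 l0 h h0 h0' ((hnot x y).2 hc)
      (fun hn => (hnot x' y').1 hn hh)

theorem obg_all {L : FirstOrder.Language.{u, v}} {T : L.Theory}
    (hnip : ∀ (m n : ℕ) (φ : L.Formula (Fin m ⊕ Fin n)), ¬ FormulaHasIP T φ)
    {M : Type (max u v)} [L.Structure M] [Nonempty M] (hM : M ⊨ T)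
    {R : ℚ → ℚ → Prop} (hR : IsRandomOBG R)
    {da db n m : ℕ} {a : ℚ → Fin da → M} {b : ℚ → Fin db → M}
    (hL : IsLStarIndiscernible (L := L) R a b)
    (ψ : L.Formula ((Fin n × Fin da) ⊕ (Fin m × Fin db))) {x x' : Fin n → ℚ} {y y' : Fin m → ℚ}
    (hx : StrictMono x) (hx' : StrictMono x') (hy : StrictMono y) (hy' : StrictMono y') :
    obgRz a b ψ x y ↔ obgRz a b ψ x' y' := by
  obtain ⟨x0, y0, hx0, hy0, h0⟩ := obg_exists_pattern hR (fun (_ : Fin n) (_ : Fin m) => False)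
  have key : ∀ (E : Finset (Fin n × Fin m)) (x : Fin n → ℚ) (y : Fin m → ℚ), StrictMono x →
      StrictMono y → (∀ k l, R (x k) (y l) ↔ (k, l) ∈ E) →
      (obgRz a b ψ x y ↔ obgRz a b ψ x0 y0) := by
    intro E
    induction E using Finset.induction_on with
    | empty =>
      intro x y hx hy h
      exact obg_pattern hL ψ hx hx0 hy hy0 fun k l => by rw [h, h0]; simp
    | insert e E he ih =>
      intro x y hx hy h
      obtain ⟨x1, y1, hx1, hy1, h1⟩ := obg_exists_pattern hR (fun k l => (k, l) ∈ E)
      refine Iff.trans ?_ (ih x1 y1 hx1 hy1 h1)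
      refine obg_step hnip hM hR hL ψ hx hx1 hy hy1 e.1 e.2 (fun k l hkl => ?_) ?_ ?_
      · rw [h, h1, Finset.mem_insert]
        simp [show (k, l) ≠ e from hkl]
      · rw [h]; simp
      · rw [h1]; exact he
  have key2 : ∀ (x : Fin n → ℚ) (y : Fin m → ℚ), StrictMono x → StrictMono y →
      (obgRz a b ψ x y ↔ obgRz a b ψ x0 y0) := fun x y hx hy =>
    key (Finset.univ.filter fun e => R (x e.1) (y e.2)) x y hx hy fun k l => by simp
  exact (key2 x y hx hy).trans (key2 x' y' hx' hy').symm

theorem obg_params {M : Type*} {db m : ℕ} (b : ℚ → Fin db → M) (p : Fin m → M)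
    (hp : ∀ l, p l ∈ ⋃ i, Set.range (b i)) :
    ∃ (r : ℕ) (y : Fin r → ℚ) (w : Fin m → Fin r × Fin db), StrictMono y ∧
      ∀ l, b (y (w l).1) (w l).2 = p l := by
  have hp' : ∀ l, ∃ c z, b c z = p l := fun l => by simpa using hp l
  choose c z hcz using hp'
  let D := Finset.univ.image c
  have hr : ∀ l, ∃ r, D.orderEmbOfFin rfl r = c l := by
    intro l
    have : c l ∈ Set.range (D.orderEmbOfFin rfl) := by
      rw [Finset.range_orderEmbOfFin]
      exact Finset.mem_coe.2 (Finset.mem_image_of_mem c (Finset.mem_univ l))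
    exact this
  choose r hr using hr
  refine ⟨D.card, D.orderEmbOfFin rfl, fun l => (r l, z l), (D.orderEmbOfFin rfl).strictMono,
    fun l => ?_⟩
  rw [hr, hcz]

theorem obg_dir_two {L : FirstOrder.Language.{u, v}} {T : L.Theory}
    (hnip : ∀ (m n : ℕ) (φ : L.Formula (Fin m ⊕ Fin n)), ¬ FormulaHasIP T φ)
    {M : Type (max u v)} [L.Structure M] [Nonempty M] (hM : M ⊨ T)
    {R : ℚ → ℚ → Prop} (hR : IsRandomOBG R)
    {da db : ℕ} {a : ℚ → Fin da → M} {b : ℚ → Fin db → M}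
    (hL : IsLStarIndiscernible (L := L) R a b) : MutuallyIndiscernible (L := L) a b := by
  constructor
  · intro n m i j hi hj p hp φ
    obtain ⟨r, y, w, hy, hw⟩ := obg_params b p hp
    have h := obg_all hnip hM hR hL (φ.relabel (Sum.map id w)) hi hj hy hy
    unfold obgRz at h
    rw [Formula.realize_relabel, Formula.realize_relabel] at h
    have e : ∀ i : Fin n → ℚ, (Sum.elim (fun v : Fin n × Fin da => a (i v.1) v.2)
        (fun v : Fin r × Fin db => b (y v.1) v.2)) ∘ Sum.map id w =
        Sum.elim (fun v : Fin n × Fin da => a (i v.1) v.2) p := by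
      intro i
      funext v
      rcases v with v | v
      · rfl
      · exact hw v
    rwa [e, e] at h
  · intro n m i j hi hj p hp φ
    obtain ⟨r, y, w, hy, hw⟩ := obg_params a p hp
    have h := obg_all hnip hM hR hL (φ.relabel (Sum.elim Sum.inr (fun l => Sum.inl (w l))))
      hy hy hi hj
    unfold obgRz at h
    rw [Formula.realize_relabel, Formula.realize_relabel] at h
    have e : ∀ i : Fin n → ℚ, (Sum.elim (fun v : Fin r × Fin da => a (y v.1) v.2)
        (fun v : Fin n × Fin db => b (i v.1) v.2)) ∘ Sum.elim Sum.inr (fun l => Sum.inl (w l)) =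
        Sum.elim (fun v : Fin n × Fin db => b (i v.1) v.2) p := by
      intro i
      funext v
      rcases v with v | v
      · rfl
      · exact hw v
    rwa [e, e] at h

end ObgDirTwo

/-- A complete theory `T` is NIP iff every `L*`-indiscernible family
`(āᵢ, b̄ᵢ : i ∈ ℚ)` in a model of `T`, indexed by the random ordered bipartite graph `G*`,
consists of two mutually indiscernible sequences. -/
theorem nip_iff_LStar_indiscernible_mutually_indiscernible
    {L : FirstOrder.Language.{u, v}} (T : L.Theory) (hT : T.IsComplete) :
    (∀ (m n : ℕ) (φ : L.Formula (Fin m ⊕ Fin n)), ¬ FormulaHasIP T φ) ↔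
      (∀ (M : Type (max u v)) [L.Structure M] [Nonempty M], M ⊨ T →
        ∀ (da db : ℕ) (a : ℚ → Fin da → M) (b : ℚ → Fin db → M) (R : ℚ → ℚ → Prop),
          IsRandomOBG R → IsLStarIndiscernible (L := L) R a b →
            MutuallyIndiscernible (L := L) a b) := by
  constructor
  · intro hnip M _ _ hM da db a b R hR hL
    exact obg_dir_two hnip hM hR hL
  · intro hall m n φ hIP
    obtain ⟨R, hR⟩ := obg_exists_random
    obtain ⟨N, a, b, hL, hab⟩ := obg_dir_one T m n φ hIP R
    have hmut := (hall N N.is_model m n a b R hR hL).1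
    obtain ⟨i, _, _, hi⟩ := obg_interval_left hR {0} (fun _ => True) 0 1 (by norm_num)
    obtain ⟨j, _, _, hj⟩ := obg_interval_left hR {0} (fun _ => False) 0 1 (by norm_num)
    have hi' : R i 0 := by simpa using hi
    have hj' : ¬ R j 0 := by simpa using hj
    have h := hmut 1 n (fun _ => i) (fun _ => j) (Subsingleton.strictMono _)
      (Subsingleton.strictMono _) (b 0) (fun l => Set.mem_iUnion.2 ⟨0, l, rfl⟩)
      (φ.relabel (Sum.map (fun z => ((0 : Fin 1), z)) id))
    rw [Formula.realize_relabel, Formula.realize_relabel] at h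
    have e : ∀ i : ℚ, (Sum.elim (fun v : Fin 1 × Fin m => a i v.2) (b 0)) ∘
        (Sum.map (fun z => ((0 : Fin 1), z)) id) = Sum.elim (a i) (b 0) := by
      intro i
      funext v
      rcases v with v | v <;> rfl
    rw [e, e, hab, hab] at h
    exact hj' (h.1 hi')
end
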